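/- arXiv:1603.08074 — 11 statements merged into one kernel-verified Lean document; each statement's English description precedes it below -/
import Mathlib

section
/- Let d ≥ 1 and let a = (a_0, …, a_{d+1}) ∈ ℤ^{d+2} be balanced nonzero. Then a point z ∈ U is a critical point of the restriction of the circuit potential W to U — i.e. the complex Fréchet derivative of W at z vanishes identically on the subspace T — if and only if z_i = a_i / a_{d+1} for every 0 ≤ i ≤ d. Moreover, at this unique critical point, W(z) = ∏_{i=0}^{d+1} a_i^{a_i}, where each factor a_i^{a_i} is the integer power (zpow) of the complex number a_i. -/
theorem fderiv_W_aux {n : ℕ} (b : Fin n → ℤ) (z : Fin n → ℂ) (hz0 : ∀ i, z i ≠ 0)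
    (v : Fin n → ℂ) :
    fderiv ℂ (fun z : Fin n → ℂ => ∏ i, z i ^ b i) z v
      = (∏ i, z i ^ b i) * ∑ i, (b i : ℂ) / z i * v i := by
  have h1 : ∀ i ∈ (Finset.univ : Finset (Fin n)),
      HasFDerivAt (fun z : Fin n → ℂ => z i ^ b i)
      (((b i : ℂ) * z i ^ (b i - 1)) • (ContinuousLinearMap.proj (R := ℂ) (φ := fun _ : Fin n => ℂ) i)) z := by
    intro i _
    have hf : HasFDerivAt (fun f : Fin n → ℂ => f i)
        (ContinuousLinearMap.proj (R := ℂ) (φ := fun _ : Fin n => ℂ) i) z := hasFDerivAt_apply i z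
    have hg := hasDerivAt_zpow (b i) (z i) (Or.inl (hz0 i))
    exact HasDerivAt.comp_hasFDerivAt (h₂ := fun w : ℂ => w ^ b i) z hg hf
  rw [(HasFDerivAt.finsetProd h1).fderiv]
  simp only [ContinuousLinearMap.sum_apply, ContinuousLinearMap.smul_apply,
    ContinuousLinearMap.proj_apply, smul_eq_mul, Finset.mul_sum]
  refine Finset.sum_congr rfl fun i _ => ?_
  rw [← Finset.mul_prod_erase Finset.univ _ (Finset.mem_univ i), zpow_sub_one₀ (hz0 i)]
  ring

/-- For a balanced nonzero `a ∈ ℤ^{d+2}` (`d ≥ 1`), a point `z` of the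
affine chart `U = {z ∈ ℂ^{d+1} : z i ≠ 0, ∑ z i = -1}` of the `d`-dimensional pair of pants
is a critical point of the circuit potential `W z = ∏ i, z i ^ a i` (i.e. the complex
Fréchet derivative of `W` at `z` vanishes on the direction subspace
`T = {v : ∑ v i = 0}`) iff `z i = a i / a (d+1)` for all `i`; moreover at that point
`W z = ∏_{i=0}^{d+1} (a i : ℂ) ^ (a i)` (zpow). -/
theorem statement0 (d : ℕ) (hd : 1 ≤ d) (a : Fin (d + 2) → ℤ)
    (hne : ∀ i, a i ≠ 0) (hbal : ∑ i, a i = 0)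
    (W : (Fin (d + 1) → ℂ) → ℂ)
    (hW : W = fun z => ∏ i : Fin (d + 1), z i ^ a i.castSucc)
    (z : Fin (d + 1) → ℂ) (hz0 : ∀ i, z i ≠ 0) (hzs : ∑ i, z i = -1) :
    ((∀ v : Fin (d + 1) → ℂ, ∑ i, v i = 0 → fderiv ℂ W z v = 0) ↔
      ∀ i : Fin (d + 1), z i = (a i.castSucc : ℂ) / (a (Fin.last (d + 1)) : ℂ)) ∧
    ((∀ i : Fin (d + 1), z i = (a i.castSucc : ℂ) / (a (Fin.last (d + 1)) : ℂ)) →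
      W z = ∏ i : Fin (d + 2), (a i : ℂ) ^ a i) := by
  have hbal' : ∑ i : Fin (d + 1), (a i.castSucc : ℂ) = -(a (Fin.last (d + 1)) : ℂ) := by
    rw [Fin.sum_univ_castSucc] at hbal
    have : ((∑ i : Fin (d + 1), a i.castSucc + a (Fin.last (d + 1)) : ℤ) : ℂ) = 0 := by
      rw [hbal]; simp
    push_cast at this
    exact eq_neg_of_add_eq_zero_left this
  have hneC : ∀ i, (a i : ℂ) ≠ 0 := fun i => by exact_mod_cast hne i
  have hL := hneC (Fin.last (d + 1))
  subst hW
  refine ⟨⟨fun h => ?_, fun h v hv => ?_⟩, fun h => ?_⟩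
  · have hP : (∏ i : Fin (d + 1), z i ^ a i.castSucc) ≠ 0 :=
      Finset.prod_ne_zero_iff.2 fun i _ => zpow_ne_zero _ (hz0 i)
    have key : ∀ i : Fin (d + 1),
        (a i.castSucc : ℂ) * z 0 = (a (Fin.castSucc 0) : ℂ) * z i := by
      intro i
      have h2 := h (Pi.single i 1 - Pi.single 0 1) (by simp)
      rw [fderiv_W_aux (fun i : Fin (d + 1) => a i.castSucc) z hz0] at h2
      have h3 := (mul_eq_zero.1 h2).resolve_left hP
      simp only [Pi.sub_apply, mul_sub, Finset.sum_sub_distrib, Pi.single_apply, mul_ite, mul_one,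
        mul_zero, Finset.sum_ite_eq', Finset.mem_univ, if_true] at h3
      have h4 := sub_eq_zero.1 h3
      rwa [div_eq_div_iff (hz0 i) (hz0 0)] at h4
    have hs : ∑ i : Fin (d + 1), (a i.castSucc : ℂ) * z 0
        = ∑ i : Fin (d + 1), (a (Fin.castSucc 0) : ℂ) * z i :=
      Finset.sum_congr rfl fun i _ => key i
    rw [← Finset.sum_mul, ← Finset.mul_sum, hbal', hzs] at hs
    intro i
    have h0 := hneC (Fin.castSucc 0)
    rw [eq_div_iff hL]
    apply mul_left_cancel₀ h0
    linear_combination (-(a (Fin.last (d + 1)) : ℂ)) * key i - (a i.castSucc : ℂ) * hs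
  · rw [fderiv_W_aux (fun i : Fin (d + 1) => a i.castSucc) z hz0]
    have : ∀ i : Fin (d + 1), (a i.castSucc : ℂ) / z i = a (Fin.last (d + 1)) := by
      intro i
      rw [h i, div_div_cancel₀ (hneC _)]
    simp only [this]
    rw [← Finset.mul_sum, hv, mul_zero, mul_zero]
  · have hl : a (Fin.last (d + 1)) = -∑ i : Fin (d + 1), a i.castSucc := by
      rw [Fin.sum_univ_castSucc] at hbal
      linarith
    have hp : ∀ s : Finset (Fin (d + 1)), ∏ i ∈ s, (a (Fin.last (d + 1)) : ℂ) ^ a i.castSucc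
        = (a (Fin.last (d + 1)) : ℂ) ^ (∑ i ∈ s, a i.castSucc) := by
      intro s
      induction s using Finset.induction_on with
      | empty => simp
      | insert i s hi ih => rw [Finset.prod_insert hi, Finset.sum_insert hi, zpow_add₀ hL, ih]
    rw [Fin.prod_univ_castSucc]
    simp only [h, div_zpow, Finset.prod_div_distrib]
    rw [hp, div_eq_mul_inv, ← zpow_neg, ← hl]
end

section
/- Let d ≥ 1 and let a = (a_0, …, a_{d+1}) ∈ ℤ^{d+2} be balanced nonzero, and let z* ∈ U be the point with coordinates z*_i = a_i / a_{d+1} for 0 ≤ i ≤ d. Then the second complex Fréchet derivative D²W(z*), viewed as a symmetric bilinear form on T × T, is nondegenerate: for every nonzero v ∈ T there exists w ∈ T with D²W(z*)(v, w) ≠ 0. (In other words, the unique critical point of W restricted to U is a nondegenerate (Morse) critical point.) -/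
lemma W_hasFDerivAt {n : ℕ} (b : Fin n → ℤ) (z : Fin n → ℂ) (hz : ∀ i, z i ≠ 0)
    (s : Finset (Fin n)) :
    HasFDerivAt (fun z : Fin n → ℂ => ∏ i ∈ s, z i ^ b i)
      ((∏ i ∈ s, z i ^ b i) • ∑ i ∈ s, ((b i : ℂ) * (z i)⁻¹) •
        (ContinuousLinearMap.proj i : (Fin n → ℂ) →L[ℂ] ℂ)) z := by
  classical
  induction s using Finset.induction_on with
  | empty => simpa using hasFDerivAt_const (1 : ℂ) z
  | insert j s hj ih =>
    have h1 : HasFDerivAt (fun z : Fin n → ℂ => z j ^ b j)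
        (((b j : ℂ) * z j ^ (b j - 1)) • (ContinuousLinearMap.proj j : (Fin n → ℂ) →L[ℂ] ℂ)) z :=
      HasDerivAt.comp_hasFDerivAt (h₂ := fun x : ℂ => x ^ b j) (f := fun z : Fin n → ℂ => z j) z
        (hasDerivAt_zpow (b j) (z j) (Or.inl (hz j)))
        (ContinuousLinearMap.proj j : (Fin n → ℂ) →L[ℂ] ℂ).hasFDerivAt
    have h2 := h1.mul ih
    simp only [Finset.prod_insert hj, Finset.sum_insert hj]
    refine HasFDerivAt.congr_fderiv h2 ?_
    rw [zpow_sub_one₀ (hz j)]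
    module

lemma L_hasFDerivAt {n : ℕ} (b : Fin n → ℤ) (z : Fin n → ℂ) (hz : ∀ i, z i ≠ 0)
    (w : Fin n → ℂ) :
    HasFDerivAt (fun z : Fin n → ℂ => ∑ i, ((b i : ℂ) * (z i)⁻¹) * w i)
      (∑ i, (-((b i : ℂ) * w i * (z i ^ 2)⁻¹)) •
        (ContinuousLinearMap.proj i : (Fin n → ℂ) →L[ℂ] ℂ)) z := by
  refine HasFDerivAt.fun_sum fun i _ => ?_
  have h1 : HasFDerivAt (fun z : Fin n → ℂ => (z i)⁻¹)
        ((-(z i ^ 2)⁻¹) • (ContinuousLinearMap.proj i : (Fin n → ℂ) →L[ℂ] ℂ)) z :=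
      (hasDerivAt_inv (hz i)).comp_hasFDerivAt z
        (ContinuousLinearMap.proj i : (Fin n → ℂ) →L[ℂ] ℂ).hasFDerivAt
  refine HasFDerivAt.congr_fderiv ((h1.const_mul (b i : ℂ)).mul_const (w i)) ?_
  module

lemma second_deriv {n : ℕ} (b : Fin n → ℤ) (z : Fin n → ℂ) (hz : ∀ i, z i ≠ 0)
    (v w : Fin n → ℂ) :
    fderiv ℂ (fderiv ℂ (fun z : Fin n → ℂ => ∏ i, z i ^ b i)) z v w =
      (∏ i, z i ^ b i) * ((∑ i, (b i : ℂ) * (z i)⁻¹ * v i) * (∑ i, (b i : ℂ) * (z i)⁻¹ * w i)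
        - ∑ i, (b i : ℂ) * w i * (z i ^ 2)⁻¹ * v i) := by
  have hev : ∀ᶠ y in nhds z, ∀ i, y i ≠ 0 := by
    rw [Filter.eventually_all]
    intro i
    exact (continuous_apply i).continuousAt.eventually_ne (hz i)
  have hEq : fderiv ℂ (fun z : Fin n → ℂ => ∏ i, z i ^ b i) =ᶠ[nhds z]
      fun z => (∏ i, z i ^ b i) • ∑ i, ((b i : ℂ) * (z i)⁻¹) •
        (ContinuousLinearMap.proj i : (Fin n → ℂ) →L[ℂ] ℂ) := by
    filter_upwards [hev] with y hy
    exact (W_hasFDerivAt b y hy Finset.univ).fderiv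
  have hdiff : DifferentiableAt ℂ (fun z : Fin n → ℂ => (∏ i, z i ^ b i) •
      ∑ i, ((b i : ℂ) * (z i)⁻¹) •
        (ContinuousLinearMap.proj i : (Fin n → ℂ) →L[ℂ] ℂ)) z := by
    refine (W_hasFDerivAt b z hz Finset.univ).differentiableAt.smul ?_
    refine DifferentiableAt.fun_sum fun i _ => ?_
    refine DifferentiableAt.smul_const ?_ _
    have h1 : DifferentiableAt ℂ (fun z : Fin n → ℂ => z i) z := differentiableAt_apply i z
    exact (h1.fun_inv (hz i)).const_mul _
  rw [hEq.fderiv_eq]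
  have h3 := hdiff.hasFDerivAt.clm_apply (hasFDerivAt_const w z)
  have h4 := (W_hasFDerivAt b z hz Finset.univ).mul (L_hasFDerivAt b z hz w)
  have h5 := h3.unique (h4.congr_of_eventuallyEq (Filter.Eventually.of_forall fun y => by
    simp))
  have h6 := congrArg (fun f => f v) h5
  simp at h6
  rw [h6]
  ring


/-- For a balanced nonzero `a ∈ ℤ^{d+2}` (`d ≥ 1`), the unique critical
point `z*` (with `z* i = a i / a (d+1)`) of the circuit potential
`W z = ∏ i, z i ^ a i` on the affine chart of the `d`-dimensional pair of pants is
nondegenerate: the second complex Fréchet derivative `D²W(z*)`, viewed as a bilinear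
form on the direction subspace `T = {v : ∑ v i = 0}`, is nondegenerate. -/
theorem statement1 (d : ℕ) (hd : 1 ≤ d) (a : Fin (d + 2) → ℤ)
    (hne : ∀ i, a i ≠ 0) (hbal : ∑ i, a i = 0)
    (W : (Fin (d + 1) → ℂ) → ℂ)
    (hW : W = fun z => ∏ i : Fin (d + 1), z i ^ a i.castSucc)
    (zstar : Fin (d + 1) → ℂ)
    (hzstar : ∀ i, zstar i = (a i.castSucc : ℂ) / (a (Fin.last (d + 1)) : ℂ)) :
    ∀ v : Fin (d + 1) → ℂ, ∑ i, v i = 0 → v ≠ 0 →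
      ∃ w : Fin (d + 1) → ℂ, ∑ i, w i = 0 ∧
        fderiv ℂ (fderiv ℂ W) zstar v w ≠ 0 := by
  intro v hv hv0
  by_contra hcon
  push Not at hcon
  have hb : (a (Fin.last (d + 1)) : ℂ) ≠ 0 := by exact_mod_cast hne _
  have ha : ∀ i : Fin (d + 1), (a i.castSucc : ℂ) ≠ 0 := fun i => by exact_mod_cast hne _
  have hz : ∀ i, zstar i ≠ 0 := fun i => by rw [hzstar]; exact div_ne_zero (ha i) hb
  have hP : (∏ i, zstar i ^ a i.castSucc) ≠ 0 :=
    Finset.prod_ne_zero_iff.2 fun i _ => zpow_ne_zero _ (hz i)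
  have hL : ∀ i, (a i.castSucc : ℂ) * (zstar i)⁻¹ = a (Fin.last (d + 1)) := fun i => by
    have := ha i
    rw [hzstar]; field_simp
  have key : ∀ w : Fin (d + 1) → ℂ, ∑ i, w i = 0 →
      ∑ i, w i * (v i / (a i.castSucc : ℂ)) = 0 := by
    intro w hw
    have h := hcon w hw
    rw [hW, second_deriv (fun i => a i.castSucc) zstar hz v w] at h
    have h := (mul_eq_zero.1 h).resolve_left hP
    simp only [hL, ← Finset.mul_sum, hv, mul_zero, zero_mul, zero_sub, neg_eq_zero] at h
    have h2 : ∀ i, (a i.castSucc : ℂ) * w i * (zstar i ^ 2)⁻¹ * v i =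
        (a (Fin.last (d + 1)) : ℂ) ^ 2 * (w i * (v i / (a i.castSucc : ℂ))) := fun i => by
      have := ha i
      rw [hzstar]; field_simp
    simp only [h2, ← Finset.mul_sum] at h
    exact (mul_eq_zero.1 h).resolve_left (pow_ne_zero 2 hb)
  have hconst : ∀ i, v i = (v 0 / (a (Fin.castSucc 0) : ℂ)) * a i.castSucc := by
    intro i
    have h := key (Pi.single i 1 - Pi.single 0 1) (by simp [Finset.sum_sub_distrib])
    simp [sub_mul, Finset.sum_sub_distrib, Pi.single_apply] at h
    have h' := sub_eq_zero.1 h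
    rw [div_eq_iff (ha i)] at h'
    simpa using h'
  have hsum : (∑ i : Fin (d + 1), (a i.castSucc : ℂ)) = - a (Fin.last (d + 1)) := by
    rw [Fin.sum_univ_castSucc] at hbal
    have : ((∑ i : Fin (d + 1), a i.castSucc : ℤ) : ℂ) + a (Fin.last (d + 1)) = 0 := by
      exact_mod_cast hbal
    push_cast at this
    exact eq_neg_of_add_eq_zero_left this
  have ht : v 0 / (a (Fin.castSucc 0) : ℂ) = 0 := by
    rw [Finset.sum_congr rfl fun i _ => hconst i, ← Finset.mul_sum, hsum] at hv
    exact (mul_eq_zero.1 hv).resolve_right (neg_ne_zero.2 hb)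
  apply hv0
  funext i
  rw [hconst i, ht, zero_mul]
  rfl
end

section
/- Let a_0, a_1 be positive integers and a_2 = −(a_0 + a_1). Define W : ℂ \ {0, −1} → ℂ by W(z) = (−1)^{a_0+a_1} · z^{a_0} · (z+1)^{a_2}, where the power with negative integer exponent a_2 is a zpow in ℂ. Then W is holomorphic on ℂ \ {0, −1}, its derivative W′ vanishes exactly at the single point z = a_0 / a_1, the critical value is W(a_0/a_1) = a_0^{a_0} · a_1^{a_1} · a_2^{a_2} (zpow of the complex numbers a_0, a_1, a_2), and the second derivative satisfies W″(a_0/a_1) ≠ 0. -/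
/-- For positive integers `a₀, a₁` and `a₂ = -(a₀+a₁)`, the
one-dimensional circuit potential `W z = (-1)^(a₀+a₁) * z^a₀ * (z+1)^a₂` (zpow)
is holomorphic on `ℂ \ {0, -1}`, its derivative vanishes exactly at `z = a₀/a₁`,
the critical value is `W (a₀/a₁) = a₀^a₀ * a₁^a₁ * a₂^a₂` (zpow of complex numbers),
and `W'' (a₀/a₁) ≠ 0`. -/
theorem statement2 (a₀ a₁ : ℤ) (h₀ : 0 < a₀) (h₁ : 0 < a₁) (a₂ : ℤ) (ha₂ : a₂ = -(a₀ + a₁))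
    (W : ℂ → ℂ)
    (hW : W = fun z : ℂ => (-1 : ℂ) ^ (a₀ + a₁) * z ^ a₀ * (z + 1) ^ a₂) :
    (∀ z : ℂ, z ≠ 0 → z ≠ -1 → DifferentiableAt ℂ W z) ∧
    (∀ z : ℂ, z ≠ 0 → z ≠ -1 → (deriv W z = 0 ↔ z = (a₀ : ℂ) / (a₁ : ℂ))) ∧
    W ((a₀ : ℂ) / (a₁ : ℂ)) = (a₀ : ℂ) ^ a₀ * (a₁ : ℂ) ^ a₁ * (a₂ : ℂ) ^ a₂ ∧
    deriv (deriv W) ((a₀ : ℂ) / (a₁ : ℂ)) ≠ 0 := by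
  have ha0 : (a₀ : ℂ) ≠ 0 := by exact_mod_cast h₀.ne'
  have ha1 : (a₁ : ℂ) ≠ 0 := by exact_mod_cast h₁.ne'
  have hs : (a₀ : ℂ) + (a₁ : ℂ) ≠ 0 := by exact_mod_cast (add_pos h₀ h₁).ne'
  have hc : ((-1 : ℂ) ^ (a₀ + a₁)) ≠ 0 := zpow_ne_zero _ (by norm_num)
  have hp0 : (a₀ : ℂ) / (a₁ : ℂ) ≠ 0 := div_ne_zero ha0 ha1
  have hp1 : (a₀ : ℂ) / (a₁ : ℂ) + 1 ≠ 0 := by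
    rw [div_add_one ha1]; exact div_ne_zero hs ha1
  have hz1 : ∀ z : ℂ, z ≠ -1 → z + 1 ≠ 0 := fun z h h' => h (eq_neg_of_add_eq_zero_left h')
  have hp1' : (a₀ : ℂ) / (a₁ : ℂ) ≠ -1 := fun h => hp1 (by rw [h]; ring)
  have ha2c : (a₂ : ℂ) = -((a₀ : ℂ) + a₁) := by rw [ha₂]; push_cast; ring
  have key : ∀ z : ℂ, z ≠ 0 → z ≠ -1 → HasDerivAt W
      (((-1 : ℂ) ^ (a₀ + a₁) * z ^ (a₀ - 1) * (z + 1) ^ (a₂ - 1)) * (a₀ - a₁ * z)) z := by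
    intro z h0 h1
    have h1' := hz1 z h1
    have d1 := (hasDerivAt_zpow a₀ z (Or.inl h0)).const_mul ((-1 : ℂ) ^ (a₀ + a₁))
    have d2 : HasDerivAt (fun z : ℂ => (z + 1) ^ a₂) ((a₂ : ℂ) * (z + 1) ^ (a₂ - 1)) z :=
      (hasDerivAt_zpow a₂ (z + 1) (Or.inl h1')).comp_add_const z 1
    rw [hW]
    refine (d1.mul d2).congr_deriv ?_
    rw [zpow_sub_one₀ h0, zpow_sub_one₀ h1', ha2c]
    field_simp
    ring
  refine ⟨fun z h0 h1 => (key z h0 h1).differentiableAt, ?_, ?_, ?_⟩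
  · intro z h0 h1
    rw [(key z h0 h1).deriv, mul_eq_zero, or_iff_right
      (mul_ne_zero (mul_ne_zero hc (zpow_ne_zero _ h0)) (zpow_ne_zero _ (hz1 z h1))),
      eq_div_iff ha1, sub_eq_zero, eq_comm, mul_comm]
  · rw [hW]
    simp only
    rw [div_add_one ha1, div_zpow, div_zpow, ha2c, neg_eq_neg_one_mul ((a₀ : ℂ) + a₁), mul_zpow]
    have e1 : (-1 : ℂ) ^ a₂ = (-1 : ℂ) ^ (a₀ + a₁) := by
      rw [ha₂, ← inv_zpow']; norm_num
    have e2 : (a₁ : ℂ) ^ a₁ * ((a₁ : ℂ) ^ a₀ * (a₁ : ℂ) ^ a₂) = 1 := by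
      rw [← zpow_add₀ ha1, ← zpow_add₀ ha1, ha₂]
      have : a₁ + (a₀ + -(a₀ + a₁)) = 0 := by ring
      rw [this, zpow_zero]
    have n0 := zpow_ne_zero a₀ ha1
    have n2 := zpow_ne_zero a₂ ha1
    rw [e1, eq_inv_of_mul_eq_one_left e2, mul_inv]
    simp only [div_eq_mul_inv]
    ring
  · have hev : deriv W =ᶠ[nhds ((a₀ : ℂ) / (a₁ : ℂ))] fun z =>
        (((-1 : ℂ) ^ (a₀ + a₁) * z ^ (a₀ - 1) * (z + 1) ^ (a₂ - 1)) * (a₀ - a₁ * z)) := by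
      filter_upwards [isOpen_ne.mem_nhds hp0, isOpen_ne.mem_nhds hp1'] with z h0 h1
      exact (key z h0 h1).deriv
    rw [hev.deriv_eq]
    have dg : DifferentiableAt ℂ (fun z : ℂ =>
        (-1 : ℂ) ^ (a₀ + a₁) * z ^ (a₀ - 1) * (z + 1) ^ (a₂ - 1)) ((a₀ : ℂ) / (a₁ : ℂ)) :=
      ((hasDerivAt_zpow (a₀ - 1) _ (Or.inl hp0)).const_mul _).differentiableAt.mul
        ((hasDerivAt_zpow (a₂ - 1) _ (Or.inl hp1)).comp_add_const _ 1).differentiableAt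
    have dl : HasDerivAt (fun z : ℂ => (a₀ : ℂ) - a₁ * z) (-(a₁ * 1)) ((a₀ : ℂ) / (a₁ : ℂ)) :=
      ((hasDerivAt_id _).const_mul (a₁ : ℂ)).const_sub _
    have hd := (dg.hasDerivAt.mul dl).deriv
    have hz : (a₀ : ℂ) - a₁ * (a₀ / a₁) = 0 := by field_simp; ring
    rw [hz, mul_zero, zero_add] at hd
    refine ne_of_eq_of_ne hd ?_
    exact mul_ne_zero (mul_ne_zero (mul_ne_zero hc (zpow_ne_zero _ hp0)) (zpow_ne_zero _ hp1))
      (by simpa using ha1)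
end

section
/- Let a_0, a_1 be positive integers, a_2 = −(a_0 + a_1), and W(z) = (−1)^{a_0+a_1} · z^{a_0} · (z+1)^{a_2} on ℂ \ {0, −1} (zpow). Set q = a_0^{a_0} · a_1^{a_1} · a_2^{a_2} ∈ ℂ (zpow). Then for every w ∈ ℂ with w ≠ 0: if w ≠ q, the fiber {z ∈ ℂ \ {0, −1} : W(z) = w} is a finite set with exactly a_0 + a_1 elements; and the fiber {z ∈ ℂ \ {0, −1} : W(z) = q} is a finite set with exactly a_0 + a_1 − 1 elements. -/
open Polynomial in
lemma aux_count (m k : ℕ) (e w : ℂ) (he : e ≠ 0) (hw : w ≠ 0) (c : ℂ)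
    (hc : c = ((m : ℂ) + 1) / ((k : ℂ) + 1)) (S : Set ℂ)
    (hS : S = {z : ℂ | w * (z + 1) ^ (m + k + 2) = e * z ^ (m + 1)}) :
    S.Finite ∧ (c ∉ S → S.ncard = m + k + 2) ∧ (c ∈ S → S.ncard = m + k + 1) := by
  classical
  have hk : (k : ℂ) + 1 ≠ 0 := by exact_mod_cast Nat.succ_ne_zero k
  have hm : (m : ℂ) + 1 ≠ 0 := by exact_mod_cast Nat.succ_ne_zero m
  have hn : (m : ℂ) + k + 2 ≠ 0 := by exact_mod_cast Nat.succ_ne_zero (m + k + 1)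
  set P : ℂ[X] := C w * (X + C 1) ^ (m + k + 2) - C e * X ^ (m + 1) with hP
  have hdA : (C w * (X + C 1) ^ (m + k + 2) : ℂ[X]).natDegree = m + k + 2 := by
    rw [natDegree_C_mul hw, natDegree_pow, natDegree_X_add_C, mul_one]
  have hdB : (C e * X ^ (m + 1) : ℂ[X]).natDegree = m + 1 := natDegree_C_mul_X_pow _ _ he
  have hd : P.natDegree = m + k + 2 := by
    rw [hP, natDegree_sub_eq_left_of_natDegree_lt (by omega), hdA]
  have hP0 : P ≠ 0 := by
    intro h; rw [h] at hd; simp at hd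
  have hcard : P.roots.card = m + k + 2 := by
    rw [← hd]; exact (splits_iff_card_roots.1 (IsAlgClosed.splits P))
  have hroot : ∀ z, P.IsRoot z ↔ w * (z + 1) ^ (m + k + 2) = e * z ^ (m + 1) := by
    intro z; simp [hP, IsRoot, sub_eq_zero]
  have hSf : S = (P.roots.toFinset : Set ℂ) := by
    ext z
    simp only [hS, Set.mem_setOf_eq, Finset.mem_coe, Multiset.mem_toFinset, mem_roots hP0, hroot]
  have hz0 : ∀ z, P.IsRoot z → z ≠ 0 := by
    rintro z hz rfl
    rw [hroot] at hz; simp [hw] at hz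
  have hz1 : ∀ z, P.IsRoot z → z + 1 ≠ 0 := by
    intro z hz h
    have := hz0 z hz
    rw [hroot, h] at hz; simp [he, this] at hz
  have hd1 : ∀ z, (derivative P).eval z =
      w * ((m + k + 2) * (z + 1) ^ (m + k + 1)) - e * ((m + 1) * z ^ m) := by
    intro z; simp [hP, derivative_pow]; 
  have hd2 : ∀ z, (derivative (derivative P)).eval z =
      w * ((m + k + 2) * ((m + k + 1) * (z + 1) ^ (m + k))) - e * ((m + 1) * (m * z ^ (m - 1))) := by
    intro z; simp [hP, derivative_pow]
  have hcrit : ∀ z, P.IsRoot z → ((derivative P).IsRoot z ↔ z = c) := by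
    intro z hz
    have a0 := hz0 z hz
    have a1 := hz1 z hz
    have hz' := (hroot z).1 hz
    have key : (z * (z + 1)) * (derivative P).eval z
        = (e * z ^ (m + 1)) * ((k + 1) * z - (m + 1)) := by
      rw [hd1]
      linear_combination ((m + k + 2) * z) * hz'
    have : (derivative P).IsRoot z ↔ (k + 1) * z - (m + 1) = 0 := by
      rw [IsRoot]
      constructor
      · intro h
        rw [h, mul_zero] at key
        exact (mul_eq_zero.1 key.symm).resolve_left (mul_ne_zero he (pow_ne_zero _ a0))
      · intro h
        rw [h, mul_zero] at key
        exact (mul_eq_zero.1 key).resolve_left (mul_ne_zero a0 a1)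
    rw [this, hc, eq_div_iff hk, sub_eq_zero, mul_comm]
  have hcrit2 : P.IsRoot c → (derivative (derivative P)).eval c ≠ 0 := by
    intro hz h
    have a0 := hz0 c hz
    have a1 := hz1 c hz
    have hz' := (hroot c).1 hz
    rw [hd2] at h
    have hpm : (m : ℂ) * c ^ (m - 1) * c = m * c ^ m := by
      cases m with
      | zero => simp
      | succ j => simp [pow_succ, mul_assoc]
    have hcc : (k + 1) * c = m + 1 := by rw [hc]; field_simp
    have h2 : (e * c ^ (m + 1)) *
        ((m + k + 2) * (m + k + 1) * c ^ 2 - (m + 1) * m * (c + 1) ^ 2) = 0 := by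
      linear_combination c ^ 2 * (c + 1) ^ 2 * h
        - ((m + k + 2) * (m + k + 1) * c ^ 2) * hz' + e * (m + 1) * c * (c + 1) ^ 2 * hpm
    have h3 := (mul_eq_zero.1 h2).resolve_left (mul_ne_zero he (pow_ne_zero _ a0))
    have h4 : ((m : ℂ) + 1) * (m + k + 2) * (k + 1) = 0 := by
      have e1 : (k + 1) * (c + 1) = (m : ℂ) + k + 2 := by linear_combination hcc
      have h5 : (m + k + 2) * (m + k + 1) * ((k + 1) * c) ^ 2
          - (m + 1) * m * ((k + 1) * (c + 1)) ^ 2 = (0 : ℂ) := by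
        linear_combination (k + 1) ^ 2 * h3
      rw [hcc, e1] at h5
      linear_combination h5
    exact mul_ne_zero (mul_ne_zero hm hn) hk h4
  have hcount : ∀ z ∈ P.roots.toFinset, P.roots.count z = 1 + if z = c then 1 else 0 := by
    intro z hz
    rw [Multiset.mem_toFinset, mem_roots hP0] at hz
    rw [count_roots]
    have hpos : 0 < P.rootMultiplicity z := (rootMultiplicity_pos hP0).2 hz
    have hone := one_lt_rootMultiplicity_iff_isRoot (t := z) hP0
    rw [hcrit z hz] at hone
    split_ifs with h
    · have := hone.2 ⟨hz, h⟩
      have : ¬ 2 < P.rootMultiplicity z := by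
        intro h3
        have := (lt_rootMultiplicity_iff_isRoot_iterate_derivative hP0).1 h3 2 le_rfl
        subst h
        exact hcrit2 hz this
      omega
    · have : ¬ 1 < P.rootMultiplicity z := fun h' => h (hone.1 h').2
      omega
  have hsum := Multiset.toFinset_sum_count_eq P.roots
  rw [Finset.sum_congr rfl hcount, Finset.sum_add_distrib, hcard, Finset.sum_ite_eq'] at hsum
  simp only [Finset.sum_const, smul_eq_mul, mul_one] at hsum
  rw [hSf, Set.ncard_coe_finset]
  refine ⟨Finset.finite_toSet _, fun h => ?_, fun h => ?_⟩
  · rw [Finset.mem_coe] at h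
    rw [if_neg h] at hsum; omega
  · rw [Finset.mem_coe] at h
    rw [if_pos h] at hsum; omega

/-- For positive integers `a₀, a₁` and `a₂ = -(a₀+a₁)`, let
`W z = (-1)^(a₀+a₁) * z^a₀ * (z+1)^a₂` (zpow) on `ℂ \ {0, -1}` and let
`q = a₀^a₀ * a₁^a₁ * a₂^a₂` be the critical value.  For `w ≠ 0` with `w ≠ q` the fiber
`{z ∈ ℂ \ {0,-1} : W z = w}` has exactly `a₀ + a₁` elements, while the fiber over `q`
has exactly `a₀ + a₁ - 1` elements. -/
theorem statement3 (a₀ a₁ : ℕ) (h₀ : 0 < a₀) (h₁ : 0 < a₁) (a₂ : ℤ) (ha₂ : a₂ = -((a₀ : ℤ) + a₁))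
    (W : ℂ → ℂ)
    (hW : W = fun z : ℂ => (-1 : ℂ) ^ ((a₀ : ℤ) + a₁) * z ^ (a₀ : ℤ) * (z + 1) ^ a₂)
    (q : ℂ) (hq : q = (a₀ : ℂ) ^ (a₀ : ℤ) * (a₁ : ℂ) ^ (a₁ : ℤ) * (a₂ : ℂ) ^ a₂) :
    ∀ w : ℂ, w ≠ 0 →
      ((w ≠ q →
        {z : ℂ | z ≠ 0 ∧ z ≠ -1 ∧ W z = w}.Finite ∧
        {z : ℂ | z ≠ 0 ∧ z ≠ -1 ∧ W z = w}.ncard = a₀ + a₁) ∧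
      ({z : ℂ | z ≠ 0 ∧ z ≠ -1 ∧ W z = q}.Finite ∧
        {z : ℂ | z ≠ 0 ∧ z ≠ -1 ∧ W z = q}.ncard = a₀ + a₁ - 1)) := by
  obtain ⟨m, rfl⟩ : ∃ m, a₀ = m + 1 := ⟨a₀ - 1, by omega⟩
  obtain ⟨k, rfl⟩ : ∃ k, a₁ = k + 1 := ⟨a₁ - 1, by omega⟩
  have hk : (k : ℂ) + 1 ≠ 0 := by exact_mod_cast Nat.succ_ne_zero k
  have hm : (m : ℂ) + 1 ≠ 0 := by exact_mod_cast Nat.succ_ne_zero m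
  have hn : (m : ℂ) + k + 2 ≠ 0 := by exact_mod_cast Nat.succ_ne_zero (m + k + 1)
  have hN : ((m + 1 : ℕ) : ℤ) + (k + 1 : ℕ) = ((m + k + 2 : ℕ) : ℤ) := by push_cast; ring
  rw [hN] at ha₂ hW
  subst ha₂
  have he : (-1 : ℂ) ^ (m + k + 2) ≠ 0 := pow_ne_zero _ (by norm_num)
  have hee : (-1 : ℂ) ^ (m + k + 2) * (-1 : ℂ) ^ (m + k + 2) = 1 := by
    rw [← mul_pow]; norm_num
  have hW' : ∀ z, W z = (-1 : ℂ) ^ (m + k + 2) * z ^ (m + 1) / (z + 1) ^ (m + k + 2) := by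
    intro z; rw [hW]; simp only [zpow_neg, zpow_natCast, div_eq_mul_inv]
  have hq' : q = (-1 : ℂ) ^ (m + k + 2) * ((m + 1) ^ (m + 1) * (k + 1) ^ (k + 1))
      / (m + k + 2) ^ (m + k + 2) := by
    rw [hq, zpow_neg, zpow_natCast, zpow_natCast, zpow_natCast]
    have : (((-((m + k + 2 : ℕ) : ℤ)) : ℤ) : ℂ) = (-1) * (m + k + 2) := by push_cast; ring
    rw [this, mul_pow, mul_inv, inv_eq_of_mul_eq_one_left hee]
    push_cast
    ring
  have hq0 : q ≠ 0 := by
    rw [hq']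
    exact div_ne_zero (mul_ne_zero he (mul_ne_zero (pow_ne_zero _ hm) (pow_ne_zero _ hk)))
      (pow_ne_zero _ hn)
  obtain ⟨c, hc⟩ : ∃ c : ℂ, c = ((m : ℂ) + 1) / ((k : ℂ) + 1) := ⟨_, rfl⟩
  have hc0 : c ≠ 0 := by rw [hc]; exact div_ne_zero hm hk
  have hc1 : c + 1 = (m + k + 2) / (k + 1) := by rw [hc]; field_simp; ring
  have hcn : c ≠ -1 := by
    intro h
    have : c + 1 ≠ 0 := by rw [hc1]; exact div_ne_zero hn hk
    exact this (by rw [h]; ring)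
  have hWc : W c = q := by
    rw [hW', hq', hc1, hc, div_pow, div_pow]
    have : ((k : ℂ) + 1) ^ (m + k + 2) = (k + 1) ^ (m + 1) * (k + 1) ^ (k + 1) := by
      rw [← pow_add]; congr 1; ring
    rw [this]
    field_simp
  have hset : ∀ w : ℂ, w ≠ 0 → {z : ℂ | z ≠ 0 ∧ z ≠ -1 ∧ W z = w} =
      {z : ℂ | w * (z + 1) ^ (m + k + 2) = (-1 : ℂ) ^ (m + k + 2) * z ^ (m + 1)} := by
    intro w hw
    ext z
    simp only [Set.mem_setOf_eq]
    constructor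
    · rintro ⟨h0, h1, h⟩
      have h2 : z + 1 ≠ 0 := fun h' => h1 (eq_neg_of_add_eq_zero_left h')
      rw [hW', div_eq_iff (pow_ne_zero _ h2)] at h
      exact h.symm
    · intro h
      have h0 : z ≠ 0 := by
        rintro rfl
        simp [hw] at h
      have h2 : z + 1 ≠ 0 := by
        intro h'
        rw [h', zero_pow (by omega), mul_zero] at h
        exact mul_ne_zero he (pow_ne_zero _ h0) h.symm
      refine ⟨h0, fun h' => h2 (by rw [h']; ring), ?_⟩
      rw [hW', div_eq_iff (pow_ne_zero _ h2)]
      exact h.symm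
  intro w hw
  refine ⟨fun hwq => ?_, ?_⟩
  · obtain ⟨hf, h1, _⟩ := aux_count m k _ w he hw c hc _ (hset w hw)
    refine ⟨hf, ?_⟩
    rw [h1 (fun h => hwq (h.2.2.symm.trans hWc))]
    ring
  · obtain ⟨hf, _, h2⟩ := aux_count m k _ q he hq0 c hc _ (hset q hq0)
    refine ⟨hf, ?_⟩
    rw [h2 ⟨hc0, hcn, hWc⟩]
    omega
end

section
/- Let d ≥ 0 and let a_0, …, a_d be positive integers with n = a_0 + ⋯ + a_d. Let G = {z ∈ (ℂ*)^{d+1} : ∏_{i=0}^{d} z_i^{a_i} = 1} and w(z) = z_0 + ⋯ + z_d. Call z ∈ G a critical point of w restricted to G if the linear functional v ↦ ∑_{i=0}^{d} v_i vanishes on the tangent space {v ∈ ℂ^{d+1} : ∑_{i=0}^{d} a_i v_i / z_i = 0} of G at z. Then z ∈ G is a critical point of w restricted to G if and only if there exists t ∈ ℂ with t^n = ∏_{i=0}^{d} a_i^{−a_i} (zpow in ℂ) and z_i = a_i · t for all 0 ≤ i ≤ d. Consequently, the set of critical points of w restricted to G has exactly n elements. -/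
theorem aux_prod (d : ℕ) (a : Fin (d + 1) → ℕ) (hpos : ∀ i, 0 < a i)
    (n : ℕ) (hn : n = ∑ i, a i) (t : ℂ) :
    ∏ i, ((a i : ℂ) * t) ^ (a i : ℤ) = 1 ↔ t ^ n = ∏ i, (a i : ℂ) ^ (-(a i : ℤ)) := by
  have h0 : ∏ i, (a i : ℂ) ^ (a i) ≠ 0 :=
    Finset.prod_ne_zero_iff.mpr fun i _ => pow_ne_zero _ (Nat.cast_ne_zero.mpr (hpos i).ne')
  simp only [zpow_neg, zpow_natCast, mul_pow, Finset.prod_mul_distrib, Finset.prod_inv_distrib,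
    Finset.prod_pow_eq_pow_sum, ← hn]
  rw [← eq_inv_mul_iff_mul_eq₀ h0, mul_one]

theorem aux_crit (d : ℕ) (a : Fin (d + 1) → ℕ) (hpos : ∀ i, 0 < a i)
    (z : Fin (d + 1) → ℂ) (hz : ∀ i, z i ≠ 0) :
    (∀ v : Fin (d + 1) → ℂ, ∑ i, (a i : ℂ) * v i / z i = 0 → ∑ i, v i = 0) ↔
      ∃ t : ℂ, ∀ i, z i = (a i : ℂ) * t := by
  have ha : ∀ i, (a i : ℂ) ≠ 0 := fun i => Nat.cast_ne_zero.mpr (hpos i).ne'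
  constructor
  · intro h
    refine ⟨z 0 / a 0, fun i => ?_⟩
    have := h (Pi.single i (z i / a i) - Pi.single 0 (z 0 / a 0)) ?_
    · simp only [Pi.sub_apply, Finset.sum_sub_distrib, Finset.sum_pi_single',
        Finset.mem_univ, if_true, sub_eq_zero, Finset.univ_sum_single,
        Fintype.sum_pi_single'] at this
      rw [← this, mul_div_cancel₀ _ (ha i)]
    · have key : ∀ j, ∑ i, (a i : ℂ) * (Pi.single j (z j / a j) : Fin (d + 1) → ℂ) i / z i = 1 := by
        intro j
        rw [Finset.sum_eq_single j]
        · have := ha j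
          have := hz j
          simp only [Pi.single_eq_same]
          field_simp
        · intro b _ hb
          simp [hb]
        · simp
      simp only [Pi.sub_apply, mul_sub, sub_div, Finset.sum_sub_distrib, key, sub_self]
  · rintro ⟨t, ht⟩ v hv
    have ht0 : t ≠ 0 := by
      rintro rfl
      exact hz 0 (by simp [ht 0])
    have : ∑ i, (a i : ℂ) * v i / z i = (∑ i, v i) / t := by
      rw [Finset.sum_div]
      refine Finset.sum_congr rfl fun i _ => ?_
      have := ha i
      rw [ht i]
      field_simp
    rw [this] at hv
    simpa [ht0] using hv

/-- For positive integers `a₀, …, a_d` with `n = ∑ aᵢ`, a point `z` of the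
subtorus `G = {z ∈ (ℂ*)^{d+1} : ∏ zᵢ^{aᵢ} = 1}` is a critical point of the mirror potential
`w(z) = ∑ zᵢ` restricted to `G` (i.e. `v ↦ ∑ vᵢ` vanishes on the tangent space
`{v : ∑ aᵢ vᵢ / zᵢ = 0}`) iff there is `t ∈ ℂ` with `t^n = ∏ aᵢ^{-aᵢ}` (zpow) and
`zᵢ = aᵢ t` for all `i`.  Consequently the set of critical points has exactly `n` elements. -/
theorem statement4 (d : ℕ) (a : Fin (d + 1) → ℕ) (hpos : ∀ i, 0 < a i)
    (n : ℕ) (hn : n = ∑ i, a i) :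
    (∀ z : Fin (d + 1) → ℂ, (∀ i, z i ≠ 0) → ∏ i, z i ^ (a i : ℤ) = 1 →
      ((∀ v : Fin (d + 1) → ℂ, ∑ i, (a i : ℂ) * v i / z i = 0 → ∑ i, v i = 0) ↔
        ∃ t : ℂ, t ^ n = ∏ i, (a i : ℂ) ^ (-(a i : ℤ)) ∧ ∀ i, z i = (a i : ℂ) * t)) ∧
    ({z : Fin (d + 1) → ℂ | ((∀ i, z i ≠ 0) ∧ ∏ i, z i ^ (a i : ℤ) = 1) ∧
        ∀ v : Fin (d + 1) → ℂ, ∑ i, (a i : ℂ) * v i / z i = 0 → ∑ i, v i = 0}.Finite ∧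
      {z : Fin (d + 1) → ℂ | ((∀ i, z i ≠ 0) ∧ ∏ i, z i ^ (a i : ℤ) = 1) ∧
        ∀ v : Fin (d + 1) → ℂ, ∑ i, (a i : ℂ) * v i / z i = 0 → ∑ i, v i = 0}.ncard = n) := by
  have ha : ∀ i, (a i : ℂ) ≠ 0 := fun i => Nat.cast_ne_zero.mpr (hpos i).ne'
  have hn0 : n ≠ 0 := by
    have := Finset.single_le_sum (f := a) (fun i _ => Nat.zero_le _) (Finset.mem_univ 0)
    have := hpos 0
    omega
  have main : ∀ z : Fin (d + 1) → ℂ, (∀ i, z i ≠ 0) → ∏ i, z i ^ (a i : ℤ) = 1 →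
      ((∀ v : Fin (d + 1) → ℂ, ∑ i, (a i : ℂ) * v i / z i = 0 → ∑ i, v i = 0) ↔
        ∃ t : ℂ, t ^ n = ∏ i, (a i : ℂ) ^ (-(a i : ℤ)) ∧ ∀ i, z i = (a i : ℂ) * t) := by
    intro z hz hp
    rw [aux_crit d a hpos z hz]
    constructor
    · rintro ⟨t, ht⟩
      refine ⟨t, ?_, ht⟩
      rw [← aux_prod d a hpos n hn]
      simpa only [ht] using hp
    · rintro ⟨t, _, ht⟩
      exact ⟨t, ht⟩
  refine ⟨main, ?_⟩
  set c : ℂ := ∏ i, (a i : ℂ) ^ (-(a i : ℤ)) with hc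
  have hc0 : c ≠ 0 := Finset.prod_ne_zero_iff.mpr fun i _ => zpow_ne_zero _ (ha i)
  have hS : {z : Fin (d + 1) → ℂ | ((∀ i, z i ≠ 0) ∧ ∏ i, z i ^ (a i : ℤ) = 1) ∧
        ∀ v : Fin (d + 1) → ℂ, ∑ i, (a i : ℂ) * v i / z i = 0 → ∑ i, v i = 0} =
      (fun (t : ℂ) (i : Fin (d + 1)) => (a i : ℂ) * t) ''
        ((Polynomial.nthRoots n c).toFinset : Set ℂ) := by
    ext z
    simp only [Set.mem_setOf_eq, Set.mem_image, Finset.mem_coe, Multiset.mem_toFinset,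
      Polynomial.mem_nthRoots (Nat.pos_of_ne_zero hn0)]
    constructor
    · rintro ⟨⟨hz, hp⟩, h⟩
      obtain ⟨t, h1, h2⟩ := (main z hz hp).1 h
      exact ⟨t, h1, funext fun i => (h2 i).symm⟩
    · rintro ⟨t, h1, rfl⟩
      have ht0 : t ≠ 0 := by
        rintro rfl
        rw [zero_pow hn0] at h1
        exact hc0 h1.symm
      have hz : ∀ i, (a i : ℂ) * t ≠ 0 := fun i => mul_ne_zero (ha i) ht0
      have hp := (aux_prod d a hpos n hn t).2 h1
      exact ⟨⟨hz, hp⟩, (main _ hz hp).2 ⟨t, h1, fun i => rfl⟩⟩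
  rw [hS]
  refine ⟨(Finset.finite_toSet _).image _, ?_⟩
  rw [Set.ncard_image_of_injective, Set.ncard_coe_finset]
  · have hprim := Complex.isPrimitiveRoot_exp n hn0
    rw [Multiset.toFinset_card_of_nodup (hprim.nthRoots_nodup hc0), hprim.card_nthRoots,
      if_pos (IsAlgClosed.exists_pow_nat_eq c (Nat.pos_of_ne_zero hn0))]
  · intro s t hst
    exact mul_left_cancel₀ (ha 0) (congrFun hst 0)
end

section
/- Fix positive integers a_0, a_1 and a real number C < 0, and for each m ∈ ℤ define μ̃_m : [C/a_0, −C/a_1] → ℂ by μ̃_m(t) = t·(1 + (2πm/C)·i) and μ_m = exp ∘ μ̃_m. Then for all integers j < k, the intersection of the images μ_j([C/a_0, −C/a_1]) ∩ μ_k([C/a_0, −C/a_1]) equals the set {exp(μ̃_k(Cn/(j−k))) : n ∈ ℤ, −(k−j)/a_0 ≤ n ≤ (k−j)/a_1}, and this set is finite with exactly ⌊(k−j)/a_0⌋ + ⌊(k−j)/a_1⌋ + 1 elements. -/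
open Complex

/-- For positive integers `a₀, a₁`, `C < 0`, logarithmic segments
`μ̃_m t = t (1 + (2πm/C) i)` on `[C/a₀, -C/a₁]` and thimble paths `μ_m = exp ∘ μ̃_m`:
for `j < k`, the intersection of the images of `μ_j` and `μ_k` equals
`{exp (μ̃_k (Cn/(j-k))) : n ∈ ℤ, -(k-j)/a₀ ≤ n ≤ (k-j)/a₁}`, and it is finite with
exactly `⌊(k-j)/a₀⌋ + ⌊(k-j)/a₁⌋ + 1` elements. -/
theorem statement6 (a₀ a₁ : ℕ) (h₀ : 0 < a₀) (h₁ : 0 < a₁) (C : ℝ) (hC : C < 0)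
    (μt : ℤ → ℝ → ℂ)
    (hμt : ∀ m t, μt m t = (t : ℂ) * (1 + (2 * Real.pi * m / C : ℝ) * I))
    (μ : ℤ → ℝ → ℂ) (hμ : ∀ m t, μ m t = Complex.exp (μt m t))
    (j k : ℤ) (hjk : j < k) :
    ((μ j '' Set.Icc (C / a₀) (-C / a₁)) ∩ (μ k '' Set.Icc (C / a₀) (-C / a₁)) =
      {w : ℂ | ∃ n : ℤ, (-((k : ℝ) - j) / a₀ ≤ (n : ℝ) ∧ (n : ℝ) ≤ ((k : ℝ) - j) / a₁) ∧
        w = Complex.exp (μt k (C * n / ((j : ℝ) - k)))}) ∧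
    ((μ j '' Set.Icc (C / a₀) (-C / a₁)) ∩ (μ k '' Set.Icc (C / a₀) (-C / a₁))).Finite ∧
    (((μ j '' Set.Icc (C / a₀) (-C / a₁)) ∩ (μ k '' Set.Icc (C / a₀) (-C / a₁))).ncard : ℤ) =
      ⌊((k : ℚ) - j) / a₀⌋ + ⌊((k : ℚ) - j) / a₁⌋ + 1 := by
  have hre : ∀ m t, (μt m t).re = t := by
    intro m t
    rw [hμt]; simp
  have hCne : (C : ℂ) ≠ 0 := by exact_mod_cast hC.ne
  have hinj : ∀ m m' t s, Complex.exp (μt m t) = Complex.exp (μt m' s) → t = s := by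
    intro m m' t s h
    have h2 := congrArg norm h
    rw [Complex.norm_exp, Complex.norm_exp, hre, hre] at h2
    exact Real.exp_injective h2
  have hD : (0 : ℝ) < (k : ℝ) - j := by
    have : (j : ℝ) < k := by exact_mod_cast hjk
    linarith
  have hD' : (j : ℝ) - k ≠ 0 := by linarith
  have hDC : (j : ℂ) - k ≠ 0 := by exact_mod_cast hD'
  have ha₀ : (0 : ℝ) < a₀ := by exact_mod_cast h₀
  have ha₁ : (0 : ℝ) < a₁ := by exact_mod_cast h₁
  have hT : ∀ n : ℤ, C * n / ((j : ℝ) - k) = (-C) * (n / ((k : ℝ) - j)) := by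
    intro n
    have := hD.ne'
    field_simp
    ring
  have hmem : ∀ n : ℤ, C * n / ((j : ℝ) - k) ∈ Set.Icc (C / a₀) (-C / a₁) ↔
      (-((k : ℝ) - j) / a₀ ≤ (n : ℝ) ∧ (n : ℝ) ≤ ((k : ℝ) - j) / a₁) := by
    intro n
    have hc : 0 < -C := by linarith
    rw [hT, Set.mem_Icc]
    have e0 : C / a₀ = (-C) * (-1 / a₀) := by ring
    have e1 : -C / a₁ = (-C) * (1 / a₁) := by ring
    rw [e0, e1, mul_le_mul_iff_right₀ hc, mul_le_mul_iff_right₀ hc,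
      div_le_div_iff₀ ha₀ hD, div_le_div_iff₀ hD ha₁, div_le_iff₀ ha₀, le_div_iff₀ ha₁]
    simp
  have hset : (μ j '' Set.Icc (C / a₀) (-C / a₁)) ∩ (μ k '' Set.Icc (C / a₀) (-C / a₁)) =
      {w : ℂ | ∃ n : ℤ, (-((k : ℝ) - j) / a₀ ≤ (n : ℝ) ∧ (n : ℝ) ≤ ((k : ℝ) - j) / a₁) ∧
        w = Complex.exp (μt k (C * n / ((j : ℝ) - k)))} := by
    ext w
    constructor
    · rintro ⟨⟨t, ht, rfl⟩, ⟨s, hs, hst⟩⟩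
      rw [hμ, hμ] at hst
      obtain rfl := hinj _ _ _ _ hst
      have hst' := hst
      rw [eq_comm, Complex.exp_eq_exp_iff_exists_int] at hst
      obtain ⟨n, hn⟩ := hst
      have him := congrArg Complex.im hn
      rw [hμt, hμt] at him
      simp at him
      have hs' : s = C * n / ((j : ℝ) - k) := by
        rw [eq_div_iff hD']
        have hpi := Real.pi_pos.ne'
        have hCn := hC.ne
        field_simp at him
        linarith
      refine ⟨n, (hmem n).1 (hs' ▸ hs), ?_⟩
      rw [hμ, ← hs', hst']
    · rintro ⟨n, hn, rfl⟩
      have hn' := (hmem n).2 hn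
      refine ⟨⟨_, hn', ?_⟩, ⟨_, hn', hμ _ _⟩⟩
      rw [hμ, Complex.exp_eq_exp_iff_exists_int]
      refine ⟨n, ?_⟩
      rw [hμt, hμt]
      push_cast
      field_simp
      ring
  have himg : {w : ℂ | ∃ n : ℤ, (-((k : ℝ) - j) / a₀ ≤ (n : ℝ) ∧ (n : ℝ) ≤ ((k : ℝ) - j) / a₁) ∧
        w = Complex.exp (μt k (C * n / ((j : ℝ) - k)))} =
      (fun n : ℤ => Complex.exp (μt k (C * n / ((j : ℝ) - k)))) ''
        (Finset.Icc (-⌊((k : ℚ) - j) / a₀⌋) ⌊((k : ℚ) - j) / a₁⌋ : Finset ℤ) := by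
    ext w
    simp only [Set.mem_setOf_eq, Set.mem_image, Finset.coe_Icc, Set.mem_Icc]
    refine exists_congr fun n => ?_
    have e1 : n ≤ ⌊((k : ℚ) - j) / a₁⌋ ↔ (n : ℝ) ≤ ((k : ℝ) - j) / a₁ := by
      rw [Int.le_floor]
      exact_mod_cast (Rat.cast_le (K := ℝ) (p := (n : ℚ)) (q := ((k : ℚ) - j) / a₁)).symm
    have e0 : -⌊((k : ℚ) - j) / a₀⌋ ≤ n ↔ -((k : ℝ) - j) / a₀ ≤ (n : ℝ) := by
      rw [neg_le, Int.le_floor, ← Rat.cast_le (K := ℝ)]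
      push_cast
      rw [neg_le, neg_div]
    rw [e0, e1, eq_comm (a := w)]
  have hfinj : Function.Injective (fun n : ℤ => Complex.exp (μt k (C * n / ((j : ℝ) - k)))) := by
    intro n n' h
    have h2 := hinj _ _ _ _ h
    have h3 := mul_left_cancel₀ hC.ne ((div_left_inj' hD').1 h2)
    exact_mod_cast h3
  refine ⟨hset, ?_, ?_⟩
  · rw [hset, himg]
    exact (Finset.finite_toSet _).image _
  · rw [hset, himg, Set.ncard_image_of_injective _ hfinj, Set.ncard_coe_finset, Int.card_Icc]
    have hq : (0 : ℚ) ≤ (k : ℚ) - j := by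
      have : (j : ℚ) < k := by exact_mod_cast hjk
      linarith
    have f0 : 0 ≤ ⌊((k : ℚ) - j) / a₀⌋ := Int.floor_nonneg.2 (by positivity)
    have f1 : 0 ≤ ⌊((k : ℚ) - j) / a₁⌋ := Int.floor_nonneg.2 (by positivity)
    rw [Int.toNat_of_nonneg (by linarith)]
    ring
end

section
/- Let d ≥ 1 and let a = (a_0, …, a_{d+1}) ∈ ℤ^{d+2} be balanced nonzero with a_0 + a_1 ≠ 0; set b = (a_0 + a_1, a_2, …, a_{d+1}) and c = (a_0, a_1, −a_0 − a_1). Let U = (U_0, U_1, U_2) ∈ ℂ^3 and V = (V_0, …, V_d) ∈ ℂ^{d+1} have all coordinates nonzero and satisfy U_0 + U_1 + U_2 = 0 and V_0 + ⋯ + V_d = 0. Define Z = (−V_0·U_0, −V_0·U_1, U_2·V_1, U_2·V_2, …, U_2·V_d) ∈ ℂ^{d+2}. Then all coordinates of Z are nonzero, Z_0 + Z_1 + ⋯ + Z_{d+1} = 0, Z_0 + Z_1 ≠ 0, and ∏_{i=0}^{d+1} Z_i^{a_i} = (−1)^{a_0+a_1} · (∏_{i=0}^{d} V_i^{b_i})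 · (∏_{i=0}^{2} U_i^{c_i}), where all integer powers are zpow in ℂ. -/
/-- Let `a ∈ ℤ^{d+2}` (`d ≥ 1`) be balanced nonzero with `a₀ + a₁ ≠ 0`,
and `b = (a₀+a₁, a₂, …, a_{d+1})`, `c = (a₀, a₁, -a₀-a₁)`.  If `U ∈ ℂ³`, `V ∈ ℂ^{d+1}`
have nonzero coordinates summing to zero, then
`Z = (-V₀U₀, -V₀U₁, U₂V₁, …, U₂V_d)` has nonzero coordinates, sums to zero, has
`Z₀ + Z₁ ≠ 0`, and `∏ Zᵢ^{aᵢ} = (-1)^(a₀+a₁) (∏ Vᵢ^{bᵢ}) (∏ Uᵢ^{cᵢ})` (zpow). -/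
theorem statement8 (d : ℕ) (hd : 1 ≤ d) (a : Fin (d + 2) → ℤ)
    (hne : ∀ i, a i ≠ 0) (hbal : ∑ i, a i = 0) (h01 : a 0 + a 1 ≠ 0)
    (b : Fin (d + 1) → ℤ) (hb : b = Fin.cons (a 0 + a 1) (fun i : Fin d => a i.succ.succ))
    (c : Fin 3 → ℤ) (hc : c = ![a 0, a 1, -(a 0) - a 1])
    (U : Fin 3 → ℂ) (hU0 : ∀ i, U i ≠ 0) (hUs : ∑ i, U i = 0)
    (V : Fin (d + 1) → ℂ) (hV0 : ∀ i, V i ≠ 0) (hVs : ∑ i, V i = 0)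
    (Z : Fin (d + 2) → ℂ)
    (hZ : Z = Fin.cons (-(V 0) * U 0)
      (Fin.cons (-(V 0) * U 1) (fun i : Fin d => U 2 * V i.succ))) :
    (∀ i, Z i ≠ 0) ∧ ∑ i, Z i = 0 ∧ Z 0 + Z 1 ≠ 0 ∧
    ∏ i : Fin (d + 2), Z i ^ a i =
      (-1 : ℂ) ^ (a 0 + a 1) * (∏ i : Fin (d + 1), V i ^ b i) * ∏ i : Fin 3, U i ^ c i := by
  have z0 : Z 0 = -(V 0) * U 0 := by rw [hZ]; rfl
  have z1 : Z 1 = -(V 0) * U 1 := by rw [hZ]; rfl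
  have zs : ∀ i : Fin d, Z i.succ.succ = U 2 * V i.succ := by intro i; rw [hZ]; rfl
  have b0 : b 0 = a 0 + a 1 := by rw [hb]; rfl
  have bs : ∀ i : Fin d, b i.succ = a i.succ.succ := by intro i; rw [hb]; rfl
  have c0 : c 0 = a 0 := by rw [hc]; rfl
  have c1 : c 1 = a 1 := by rw [hc]; rfl
  have c2 : c 2 = -(a 0) - a 1 := by rw [hc]; rfl
  have e1 : Fin.succ (0 : Fin (d + 1)) = 1 := rfl
  rw [Fin.sum_univ_succ, Fin.sum_univ_succ, e1] at hbal
  rw [Fin.sum_univ_three] at hUs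
  rw [Fin.sum_univ_succ] at hVs
  have hS : ∑ i : Fin d, a i.succ.succ = -(a 0) - a 1 := by linarith
  refine ⟨?_, ?_, ?_, ?_⟩
  · intro i
    refine Fin.cases ?_ (fun j => ?_) i
    · rw [z0]; exact mul_ne_zero (neg_ne_zero.mpr (hV0 0)) (hU0 0)
    · refine Fin.cases ?_ (fun k => ?_) j
      · rw [e1, z1]; exact mul_ne_zero (neg_ne_zero.mpr (hV0 0)) (hU0 1)
      · rw [zs]; exact mul_ne_zero (hU0 2) (hV0 _)
  · rw [Fin.sum_univ_succ, Fin.sum_univ_succ, e1, z0, z1]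
    simp only [zs]
    rw [← Finset.mul_sum]
    linear_combination (-(V 0)) * hUs + U 2 * hVs
  · have h : Z 0 + Z 1 = V 0 * U 2 := by
      rw [z0, z1]; linear_combination (-(V 0)) * hUs
    rw [h]; exact mul_ne_zero (hV0 0) (hU0 2)
  · have hp : ∀ (s : Finset (Fin d)), ∏ i ∈ s, U 2 ^ a i.succ.succ
        = U 2 ^ (∑ i ∈ s, a i.succ.succ) := by
      intro s
      induction s using Finset.induction_on with
      | empty => simp
      | insert x s hx ih =>
        rw [Finset.prod_insert hx, Finset.sum_insert hx, ih, zpow_add₀ (hU0 2)]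
    rw [Fin.prod_univ_succ, Fin.prod_univ_succ, e1, z0, z1, Fin.prod_univ_succ (n := d),
      Fin.prod_univ_three, c0, c1, c2, b0]
    simp only [zs, bs, mul_zpow]
    rw [Finset.prod_mul_distrib, hp, hS, neg_eq_neg_one_mul (V 0)]
    simp only [mul_zpow]
    rw [zpow_add₀ (hV0 0), zpow_add₀ (by norm_num : (-1 : ℂ) ≠ 0)]
    ring
end

section
/- For every d ≥ 1, the maps g([U_0:U_1:U_2], [V_0:⋯:V_d]) = [−V_0·U_0 : −V_0·U_1 : U_2·V_1 : ⋯ : U_2·V_d] and h([Z_0:⋯:Z_{d+1}]) = ([Z_0 : Z_1 : −Z_0−Z_1], [Z_0+Z_1 : Z_2 : ⋯ : Z_{d+1}]) are well defined (independent of the choices of representatives) and are mutually inverse bijections between the product P_1 × P_{d−1} and the subset {[Z_0:⋯:Z_{d+1}] ∈ P_d : Z_0 + Z_1 ≠ 0}. -/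
open Projectivization

def gv {d : ℕ} (U : Fin 3 → ℂ) (V : Fin (d + 1) → ℂ) : Fin (d + 2) → ℂ :=
  Fin.cons (-(V 0) * U 0) (Fin.cons (-(V 0) * U 1) (fun i : Fin d => U 2 * V i.succ))

def hu' {d : ℕ} (Z : Fin (d + 2) → ℂ) : Fin 3 → ℂ := ![Z 0, Z 1, -(Z 0) - Z 1]

def hv' {d : ℕ} (Z : Fin (d + 2) → ℂ) : Fin (d + 1) → ℂ :=
  Fin.cons (Z 0 + Z 1) (fun i : Fin d => Z i.succ.succ)

def Good {n : ℕ} (v : Fin n → ℂ) : Prop := (∀ i, v i ≠ 0) ∧ ∑ i, v i = 0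

open Classical in
noncomputable def mkD {n : ℕ} (v : Fin (n + 1) → ℂ) : Projectivization ℂ (Fin (n + 1) → ℂ) :=
  if hv : v ≠ 0 then Projectivization.mk ℂ v hv
  else Projectivization.mk ℂ (fun _ => 1) (fun h => one_ne_zero (congrFun h 0))

lemma mkD_eq {n : ℕ} (v : Fin (n + 1) → ℂ) (hv : v ≠ 0) :
    mkD v = Projectivization.mk ℂ v hv := by
  simp [mkD, hv]

lemma mkD_smul {n : ℕ} (c : ℂ) (hc : c ≠ 0) (v : Fin (n + 1) → ℂ) : mkD (c • v) = mkD v := by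
  by_cases hv : v = 0
  · simp [hv]
  · rw [mkD_eq v hv, mkD_eq (c • v) (smul_ne_zero hc hv), Projectivization.mk_eq_mk_iff']
    exact ⟨c, rfl⟩

lemma mkD_rep {n : ℕ} (p : Projectivization ℂ (Fin (n + 1) → ℂ)) : mkD p.rep = p := by
  rw [mkD_eq _ p.rep_nonzero, Projectivization.mk_rep]

lemma rep_mkD {n : ℕ} (v : Fin (n + 1) → ℂ) (hv : v ≠ 0) :
    ∃ a : ℂ, a ≠ 0 ∧ (mkD v).rep = a • v := by
  rw [mkD_eq v hv]
  obtain ⟨a, ha⟩ := Projectivization.exists_smul_eq_mk_rep ℂ v hv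
  exact ⟨a, a.ne_zero, ha.symm⟩

lemma Good.ne {n : ℕ} {v : Fin (n + 1) → ℂ} (h : Good v) : v ≠ 0 :=
  fun h0 => h.1 0 (congrFun h0 0)

lemma Good.smul {n : ℕ} {v : Fin n → ℂ} (h : Good v) {c : ℂ} (hc : c ≠ 0) : Good (c • v) := by
  refine ⟨fun i => mul_ne_zero hc (h.1 i), ?_⟩
  simp [← Finset.mul_sum, h.2]

lemma Good.rep {n : ℕ} {v : Fin (n + 1) → ℂ} (h : Good v) : Good (mkD v).rep := by
  obtain ⟨a, ha, e⟩ := rep_mkD v h.ne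
  rw [e]; exact h.smul ha

lemma gv_smul {d : ℕ} (a b : ℂ) (U : Fin 3 → ℂ) (V : Fin (d + 1) → ℂ) :
    gv (a • U) (b • V) = (a * b) • gv U V := by
  funext i
  refine Fin.cases ?_ (fun i => Fin.cases ?_ (fun i => ?_) i) i <;> simp [gv] <;> ring

lemma hu_smul {d : ℕ} (a : ℂ) (Z : Fin (d + 2) → ℂ) : hu' (a • Z) = a • hu' Z := by
  funext i
  fin_cases i <;> simp [hu']; ring

lemma hv_smul {d : ℕ} (a : ℂ) (Z : Fin (d + 2) → ℂ) : hv' (a • Z) = a • hv' Z := by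
  funext i
  refine Fin.cases ?_ (fun i => ?_) i <;> simp [hv']; ring

lemma hu_gv {d : ℕ} (U : Fin 3 → ℂ) (V : Fin (d + 1) → ℂ) (hU : Good U) :
    hu' (gv U V) = (-V 0) • U := by
  have h := hU.2
  simp only [Fin.sum_univ_three] at h
  have e1 : gv U V 1 = -(V 0) * U 1 := rfl
  have e0 : gv U V 0 = -(V 0) * U 0 := rfl
  funext i
  fin_cases i <;> simp [hu', e0, e1]
  linear_combination V 0 * h

lemma hv_gv {d : ℕ} (U : Fin 3 → ℂ) (V : Fin (d + 1) → ℂ) (hU : Good U) :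
    hv' (gv U V) = (U 2) • V := by
  have h := hU.2
  simp only [Fin.sum_univ_three] at h
  have e1 : gv U V 1 = -(V 0) * U 1 := rfl
  have e0 : gv U V 0 = -(V 0) * U 0 := rfl
  funext i
  refine Fin.cases ?_ (fun i => ?_) i
  · simp [hv', e0, e1]
    linear_combination (-V 0) * h
  · simp [hv', gv]

lemma gv_h {d : ℕ} (Z : Fin (d + 2) → ℂ) :
    gv (hu' Z) (hv' Z) = (-(Z 0 + Z 1)) • Z := by
  funext i
  refine Fin.cases ?_ (fun i => Fin.cases ?_ (fun i => ?_) i) i <;> simp [gv, hu', hv'] <;> ring_nf <;> simp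

lemma gv_good {d : ℕ} {U : Fin 3 → ℂ} {V : Fin (d + 1) → ℂ} (hU : Good U) (hV : Good V) :
    Good (gv U V) ∧ gv U V 0 + gv U V 1 ≠ 0 := by
  have h := hU.2
  have h' := hV.2
  simp only [Fin.sum_univ_three] at h
  rw [Fin.sum_univ_succ] at h'
  have e1 : gv U V 1 = -(V 0) * U 1 := rfl
  have e0 : gv U V 0 = -(V 0) * U 0 := rfl
  refine ⟨⟨fun i => ?_, ?_⟩, ?_⟩
  · refine Fin.cases ?_ (fun i => Fin.cases ?_ (fun i => ?_) i) i <;> simp [gv, hU.1, hV.1]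
  · rw [Fin.sum_univ_succ, Fin.sum_univ_succ]
    simp only [gv, Fin.cons_zero, Fin.cons_succ, ← Finset.mul_sum]
    linear_combination U 2 * h' - V 0 * h
  · have : gv U V 0 + gv U V 1 = V 0 * U 2 := by
      rw [e0, e1]; linear_combination (-V 0) * h
    rw [this]; exact mul_ne_zero (hV.1 _) (hU.1 _)

lemma h_good {d : ℕ} {Z : Fin (d + 2) → ℂ} (hZ : Good Z) (h01 : Z 0 + Z 1 ≠ 0) :
    Good (hu' Z) ∧ Good (hv' Z) := by
  have h := hZ.2
  rw [Fin.sum_univ_succ, Fin.sum_univ_succ] at h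
  refine ⟨⟨fun i => ?_, ?_⟩, ⟨fun i => ?_, ?_⟩⟩
  · fin_cases i
    · exact hZ.1 0
    · exact hZ.1 1
    · intro h2
      apply h01
      have h3 : -(Z 0) - Z 1 = 0 := h2
      linear_combination -h3
  · simp [Fin.sum_univ_three, hu']
  · refine Fin.cases ?_ (fun i => ?_) i
    · simpa [hv'] using h01
    · simpa [hv'] using hZ.1 _
  · rw [Fin.sum_univ_succ]
    simp only [hv', Fin.cons_zero, Fin.cons_succ]
    rw [← h, ← add_assoc]; rfl

noncomputable def gM {d : ℕ}
    (p : Projectivization ℂ (Fin 3 → ℂ) × Projectivization ℂ (Fin (d + 1) → ℂ)) :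
    Projectivization ℂ (Fin (d + 2) → ℂ) := mkD (gv p.1.rep p.2.rep)

noncomputable def hM {d : ℕ} (z : Projectivization ℂ (Fin (d + 2) → ℂ)) :
    Projectivization ℂ (Fin 3 → ℂ) × Projectivization ℂ (Fin (d + 1) → ℂ) :=
  (mkD (hu' z.rep), mkD (hv' z.rep))

lemma gM_mk {d : ℕ} (U : Fin 3 → ℂ) (V : Fin (d + 1) → ℂ) (hU : U ≠ 0) (hV : V ≠ 0) :
    gM (mkD U, mkD V) = mkD (gv U V) := by
  obtain ⟨a, ha, ea⟩ := rep_mkD U hU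
  obtain ⟨b, hb, eb⟩ := rep_mkD V hV
  simp only [gM]
  rw [ea, eb, gv_smul, mkD_smul _ (mul_ne_zero ha hb)]

lemma hM_mk {d : ℕ} (Z : Fin (d + 2) → ℂ) (hZ : Z ≠ 0) :
    hM (mkD Z) = (mkD (hu' Z), mkD (hv' Z)) := by
  obtain ⟨a, ha, ea⟩ := rep_mkD Z hZ
  simp only [hM]
  rw [ea, hu_smul, hv_smul, mkD_smul _ ha, mkD_smul _ ha]

/-- For `d ≥ 1`, the maps
`g([U₀:U₁:U₂], [V₀:⋯:V_d]) = [-V₀U₀ : -V₀U₁ : U₂V₁ : ⋯ : U₂V_d]` and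
`h([Z₀:⋯:Z_{d+1}]) = ([Z₀:Z₁:-Z₀-Z₁], [Z₀+Z₁:Z₂:⋯:Z_{d+1}])` are well defined
(independent of representatives) and mutually inverse bijections between
`P₁ × P_{d-1}` and `{[Z] ∈ P_d : Z₀ + Z₁ ≠ 0}`, where `P_m` is the `m`-dimensional
pair of pants (points of `ℙ^{m+1}` with coordinates nonzero and summing to zero). -/
theorem statement9 (d : ℕ) (hd : 1 ≤ d)
    (A : Set (Projectivization ℂ (Fin 3 → ℂ) × Projectivization ℂ (Fin (d + 1) → ℂ)))
    (hA : A = {p | ((∀ i, p.1.rep i ≠ 0) ∧ ∑ i, p.1.rep i = 0) ∧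
      ((∀ i, p.2.rep i ≠ 0) ∧ ∑ i, p.2.rep i = 0)})
    (B : Set (Projectivization ℂ (Fin (d + 2) → ℂ)))
    (hB : B = {z | ((∀ i, z.rep i ≠ 0) ∧ ∑ i, z.rep i = 0) ∧ z.rep 0 + z.rep 1 ≠ 0}) :
    ∃ (g : Projectivization ℂ (Fin 3 → ℂ) × Projectivization ℂ (Fin (d + 1) → ℂ) →
        Projectivization ℂ (Fin (d + 2) → ℂ))
      (h : Projectivization ℂ (Fin (d + 2) → ℂ) →
        Projectivization ℂ (Fin 3 → ℂ) × Projectivization ℂ (Fin (d + 1) → ℂ)),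
      (∀ (U : Fin 3 → ℂ) (_ : ∀ i, U i ≠ 0) (_ : ∑ i, U i = 0)
          (V : Fin (d + 1) → ℂ) (_ : ∀ i, V i ≠ 0) (_ : ∑ i, V i = 0)
          (hU : U ≠ 0) (hV : V ≠ 0)
          (hZ : (Fin.cons (-(V 0) * U 0) (Fin.cons (-(V 0) * U 1)
            (fun i : Fin d => U 2 * V i.succ)) : Fin (d + 2) → ℂ) ≠ 0),
        g (Projectivization.mk ℂ U hU, Projectivization.mk ℂ V hV) =
          Projectivization.mk ℂ _ hZ) ∧
      (∀ (Z : Fin (d + 2) → ℂ) (_ : ∀ i, Z i ≠ 0) (_ : ∑ i, Z i = 0)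
          (_ : Z 0 + Z 1 ≠ 0) (hZ : Z ≠ 0)
          (hu : (![Z 0, Z 1, -(Z 0) - Z 1] : Fin 3 → ℂ) ≠ 0)
          (hv : (Fin.cons (Z 0 + Z 1) (fun i : Fin d => Z i.succ.succ) :
            Fin (d + 1) → ℂ) ≠ 0),
        h (Projectivization.mk ℂ Z hZ) =
          (Projectivization.mk ℂ _ hu, Projectivization.mk ℂ _ hv)) ∧
      Set.MapsTo g A B ∧ Set.MapsTo h B A ∧ Set.InvOn h g A B := by
  subst hA hB
  refine ⟨gM, hM, ?_, ?_, ?_, ?_, ?_, ?_⟩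
  · intro U _ _ V _ _ hU hV hZ
    rw [← mkD_eq U hU, ← mkD_eq V hV, gM_mk U V hU hV]
    exact mkD_eq _ hZ
  · intro Z _ _ _ hZ hu hv
    rw [← mkD_eq Z hZ, hM_mk Z hZ]
    exact Prod.ext (mkD_eq _ hu) (mkD_eq _ hv)
  · rintro p ⟨h1, h2⟩
    obtain ⟨hg, h01⟩ := gv_good h1 h2
    refine ⟨hg.rep, ?_⟩
    obtain ⟨a, ha, e⟩ := rep_mkD _ hg.ne
    have e' : (gM p).rep = a • gv p.1.rep p.2.rep := e
    rw [e']
    simpa [← mul_add] using And.intro ha h01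
  · rintro z ⟨h1, h2⟩
    obtain ⟨ha, hb⟩ := h_good h1 h2
    exact ⟨ha.rep, hb.rep⟩
  · rintro p ⟨h1, h2⟩
    obtain ⟨hg, h01⟩ := gv_good h1 h2
    have e : hM (gM p) = _ := hM_mk _ hg.ne
    rw [e, hu_gv _ _ h1, hv_gv _ _ h1, mkD_smul _ (neg_ne_zero.mpr (h2.1 0)),
      mkD_smul _ (h1.1 2), mkD_rep, mkD_rep]
  · rintro z ⟨h1, h2⟩
    obtain ⟨ha, hb⟩ := h_good h1 h2
    have e : gM (hM z) = _ := gM_mk _ _ ha.ne hb.ne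
    rw [e, gv_h, mkD_smul _ (neg_ne_zero.mpr h2), mkD_rep]
end

section
/- Let d ≥ 2 and let a = (a_0, …, a_{d+1}) ∈ ℤ^{d+2} be balanced nonzero. Define G : U → ℂ² by G(z) = (W(z), z_0/z_1). Then for z ∈ U, the restriction of the complex Fréchet derivative DG(z) to the subspace T, as a linear map T → ℂ², has rank at most 1 if and only if z_i = a_i / a_{d+1} for every i with 2 ≤ i ≤ d. (In particular the critical locus of the pair (W, z_0/z_1) on U is the one-parameter family where the last d−1 coordinates are fixed at a_i/a_{d+1} and z_0 + z_1 = (a_0+a_1)/a_{d+1}.) -/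
lemma aux_fderiv (d : ℕ) (a : Fin (d + 1) → ℤ) (z : Fin (d + 1) → ℂ) (hz0 : ∀ i, z i ≠ 0)
    (v : Fin (d + 1) → ℂ) :
    fderiv ℂ (fun z : Fin (d + 1) → ℂ => (∏ i : Fin (d + 1), z i ^ a i, z 0 / z 1)) z v
      = ((∏ i, z i ^ a i) * ∑ i, (a i : ℂ) / z i * v i,
          (z 0 / z 1) * (v 0 / z 0 - v 1 / z 1)) := by
  have hp : ∀ i : Fin (d + 1), HasFDerivAt (fun z : Fin (d + 1) → ℂ => z i)
      (ContinuousLinearMap.proj (R := ℂ) (φ := fun _ : Fin (d + 1) => ℂ) i) z := fun i =>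
    hasFDerivAt_apply i z
  have h1 : ∀ i : Fin (d + 1), HasFDerivAt (fun z : Fin (d + 1) → ℂ => z i ^ a i)
      (((a i : ℂ) * z i ^ (a i - 1)) •
        ContinuousLinearMap.proj (R := ℂ) (φ := fun _ : Fin (d + 1) => ℂ) i) z := fun i =>
    HasDerivAt.comp_hasFDerivAt (h₂ := fun x : ℂ => x ^ a i) z
      (hasDerivAt_zpow (a i) (z i) (Or.inl (hz0 i))) (hp i)
  have h2 := HasFDerivAt.finset_prod (u := Finset.univ) (fun i _ => h1 i)
  have h3 := (hp 0).fun_mul ((hasDerivAt_inv (hz0 1)).comp_hasFDerivAt z (hp 1))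
  have h4 := h2.prodMk h3
  have e : (fun z : Fin (d + 1) → ℂ => (∏ i : Fin (d + 1), z i ^ a i, z 0 / z 1)) =
      fun z => (∏ i : Fin (d + 1), z i ^ a i, z 0 * (Inv.inv ∘ fun z : Fin (d + 1) → ℂ => z 1) z) := by
    funext z; simp [div_eq_mul_inv]
  rw [e, h4.fderiv]
  ext
  · simp only [ContinuousLinearMap.prod_apply, ContinuousLinearMap.sum_apply, Finset.mul_sum]
    refine Finset.sum_congr rfl fun i _ => ?_
    rw [← Finset.mul_prod_erase Finset.univ (fun j => z j ^ a j) (Finset.mem_univ i)]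
    simp [zpow_sub_one₀ (hz0 i)]
    ring
  · have := hz0 0
    have := hz0 1
    simp
    field_simp
    ring

theorem statement10 (d : ℕ) (hd : 2 ≤ d) (a : Fin (d + 2) → ℤ)
    (hne : ∀ i, a i ≠ 0) (hbal : ∑ i, a i = 0)
    (G : (Fin (d + 1) → ℂ) → ℂ × ℂ)
    (hG : G = fun z => (∏ i : Fin (d + 1), z i ^ a i.castSucc, z 0 / z 1))
    (T : Submodule ℂ (Fin (d + 1) → ℂ))
    (hT : (T : Set (Fin (d + 1) → ℂ)) = {v | ∑ i, v i = 0})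
    (z : Fin (d + 1) → ℂ) (hz0 : ∀ i, z i ≠ 0) (hzs : ∑ i, z i = -1) :
    Module.rank ℂ ↥(T.map (fderiv ℂ G z).toLinearMap) ≤ 1 ↔
      ∀ i : Fin (d + 1), 2 ≤ (i : ℕ) →
        z i = (a i.castSucc : ℂ) / (a (Fin.last (d + 1)) : ℂ) := by
  obtain ⟨k, rfl⟩ : ∃ k, d = k + 2 := ⟨d - 2, by omega⟩
  have hT' : ∀ v, v ∈ T ↔ ∑ i, v i = 0 := fun v => by
    rw [← SetLike.mem_coe, hT]; rfl
  have hD := aux_fderiv (k + 2) (fun i => a i.castSucc) z hz0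
  rw [← hG] at hD
  have hW : (∏ i : Fin (k + 2 + 1), z i ^ a i.castSucc) ≠ 0 :=
    Finset.prod_ne_zero_iff.2 fun i _ => zpow_ne_zero _ (hz0 i)
  set W := (∏ i : Fin (k + 2 + 1), z i ^ a i.castSucc) with hWd
  have hl : (a (Fin.last (k + 2 + 1)) : ℂ) ≠ 0 := by exact_mod_cast hne _
  have hb : ∑ i : Fin (k + 2 + 1), (a i.castSucc : ℂ) = - (a (Fin.last (k + 2 + 1)) : ℂ) := by
    rw [Fin.sum_univ_castSucc] at hbal
    have : ((∑ i : Fin (k + 2 + 1), a i.castSucc + a (Fin.last (k + 2 + 1)) : ℤ) : ℂ) = 0 := by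
      rw [hbal]; simp
    push_cast at this
    linear_combination this
  have hr : z 0 / z 1 ≠ 0 := div_ne_zero (hz0 0) (hz0 1)
  set m := (a (Fin.last (k + 2 + 1)) : ℂ) with hm
  rw [rank_submodule_le_one_iff']
  constructor
  · rintro ⟨p, hp⟩
    have hdet : ∀ v ∈ T, ∀ w ∈ T,
        (∑ i, (a i.castSucc : ℂ) / z i * v i) * (w 0 / z 0 - w 1 / z 1) =
        (∑ i, (a i.castSucc : ℂ) / z i * w i) * (v 0 / z 0 - v 1 / z 1) := by
      intro v hv w hw
      obtain ⟨c, hc⟩ := Submodule.mem_span_singleton.1 (hp (Submodule.mem_map_of_mem hv))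
      obtain ⟨e, he⟩ := Submodule.mem_span_singleton.1 (hp (Submodule.mem_map_of_mem hw))
      have hc' := hc.trans (hD v)
      have he' := he.trans (hD w)
      have c1 := congrArg Prod.fst hc'
      have c2 := congrArg Prod.snd hc'
      have e1 := congrArg Prod.fst he'
      have e2 := congrArg Prod.snd he'
      simp only [Prod.smul_fst, Prod.smul_snd, smul_eq_mul] at c1 c2 e1 e2
      apply mul_left_cancel₀ (mul_ne_zero hW hr)
      generalize (∑ i, (a i.castSucc : ℂ) / z i * v i) = A at *
      generalize (∑ i, (a i.castSucc : ℂ) / z i * w i) = B at *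
      generalize (v 0 / z 0 - v 1 / z 1) = C at *
      generalize (w 0 / z 0 - w 1 / z 1) = D at *
      calc W * (z 0 / z 1) * (A * D) = (W * A) * (z 0 / z 1 * D) := by ring
        _ = (W * B) * (z 0 / z 1 * C) := by
          rw [← c1, ← c2, ← e1, ← e2]; ring
        _ = _ := by ring
    have hmem : ∀ i : Fin (k + 2 + 1), (Pi.single i 1 - Pi.single 2 1 : Fin (k+2+1) → ℂ) ∈ T := by
      intro i
      rw [hT']
      simp
    have h20 : (2 : Fin (k+2+1)) ≠ 0 := by
      have h2 : 2 % (k + 2 + 1) = 2 := Nat.mod_eq_of_lt (by omega)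
      simp [Fin.ext_iff, h2]
    have h21 : (2 : Fin (k+2+1)) ≠ 1 := by
      have h2 : 2 % (k + 2 + 1) = 2 := Nat.mod_eq_of_lt (by omega)
      simp [Fin.ext_iff, h2]
    have h01 : (0 : Fin (k+2+1)) ≠ 1 := by simp
    have hsum : ∀ i : Fin (k + 2 + 1), (∑ j, (a j.castSucc : ℂ) / z j *
        (Pi.single i 1 - Pi.single 2 1 : Fin (k+2+1) → ℂ) j) =
        (a i.castSucc : ℂ) / z i - (a (2 : Fin (k+2+1)).castSucc : ℂ) / z 2 := by
      intro i
      simp [mul_sub, Finset.sum_sub_distrib, Pi.single_apply]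
    set μ := (a (2 : Fin (k+2+1)).castSucc : ℂ) / z 2 with hμ
    obtain ⟨l, hl'⟩ : ∃ l, l = ((a (0 : Fin (k+2+1)).castSucc : ℂ) / z 0 - μ) * z 0 := ⟨_, rfl⟩
    have key : ∀ i : Fin (k + 2 + 1), (a i.castSucc : ℂ) =
        μ * z i + l * (if i = 0 then 1 else if i = 1 then -1 else 0) := by
      intro i
      have h := hdet _ (hmem i) _ (hmem 0)
      rw [hsum, hsum] at h
      have := hz0 0
      have := hz0 1
      have := hz0 i
      have hx : (a i.castSucc : ℂ) / z i = μ + l * ((Pi.single i 1 : Fin (k+2+1) → ℂ) 0 / z 0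
          - (Pi.single i 1 : Fin (k+2+1) → ℂ) 1 / z 1) := by
        rw [hl']
        simp [Pi.single_apply, h20.symm, h21.symm, h01.symm] at h ⊢
        field_simp at h ⊢
        linear_combination h
      rw [div_eq_iff this] at hx
      rw [hx]
      by_cases h0 : i = 0
      · subst h0; simp [Pi.single_apply]; field_simp
      · by_cases h1 : i = 1
        · subst h1; simp [Pi.single_apply]; field_simp
        · simp [Pi.single_apply, h0, h1, Ne.symm h0, Ne.symm h1, eq_comm]
    have hμm : μ = m := by
      have h := hb
      rw [Finset.sum_congr rfl (fun i _ => key i), Finset.sum_add_distrib, ← Finset.mul_sum,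
        ← Finset.mul_sum, hzs, Fin.sum_univ_succ, Fin.sum_univ_succ] at h
      have hss : ∀ j : Fin (k + 1), j.succ.succ ≠ (1 : Fin (k + 2 + 1)) := by
        intro j hj
        have := congrArg Fin.val hj
        simp at this
      simp only [if_true, Fin.succ_ne_zero, if_false, hss, Fin.succ_zero_eq_one,
        Finset.sum_const_zero, h01.symm] at h
      linear_combination -h
    intro i hi
    have h := key i
    have h0 : i ≠ 0 := by rintro rfl; simp at hi
    have h1 : i ≠ 1 := by rintro rfl; simp at hi
    rw [if_neg h0, if_neg h1, hμm] at h
    rw [eq_div_iff hl, h]; ring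
  · intro h
    have key2 : ∀ j : Fin (k + 1), (a j.succ.succ.castSucc : ℂ) = m * z j.succ.succ := by
      intro j
      have := h j.succ.succ (by simp)
      rw [eq_div_iff hl] at this
      rw [← this]; ring
    have h01 : (a (0 : Fin (k+2+1)).castSucc : ℂ) - m * z 0 +
        ((a (1 : Fin (k+2+1)).castSucc : ℂ) - m * z 1) = 0 := by
      rw [Fin.sum_univ_succ, Fin.sum_univ_succ] at hb hzs
      simp only [key2, ← Finset.mul_sum] at hb
      simp only [Fin.succ_zero_eq_one] at hb hzs
      linear_combination hb - m * hzs
    refine ⟨(W * ((a (0 : Fin (k+2+1)).castSucc : ℂ) - m * z 0), z 0 / z 1), ?_⟩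
    rintro _ ⟨v, hv, rfl⟩
    have hv' := (hT' v).1 hv
    refine Submodule.mem_span_singleton.2 ⟨v 0 / z 0 - v 1 / z 1, Eq.trans ?_ (hD v).symm⟩
    have hs : ∑ i : Fin (k+2+1), (a i.castSucc : ℂ) / z i * v i =
        ((a (0 : Fin (k+2+1)).castSucc : ℂ) - m * z 0) * (v 0 / z 0 - v 1 / z 1) := by
      have e : ∀ j : Fin (k + 1), (a j.succ.succ.castSucc : ℂ) / z j.succ.succ * v j.succ.succ =
          m * v j.succ.succ := by
        intro j
        have := hz0 j.succ.succ
        rw [key2]; field_simp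
      rw [Fin.sum_univ_succ, Fin.sum_univ_succ] at hv' ⊢
      simp only [e, ← Finset.mul_sum]
      simp only [Fin.succ_zero_eq_one] at hv' ⊢
      have := hz0 0
      have := hz0 1
      generalize (∑ i : Fin (k+1), v i.succ.succ) = S at *
      have hS : S = - v 0 - v 1 := by linear_combination hv'
      have ha1 : (a (1 : Fin (k+2+1)).castSucc : ℂ) = m * z 1 -
        ((a (0 : Fin (k+2+1)).castSucc : ℂ) - m * z 0) := by linear_combination h01
      rw [hS, ha1]
      field_simp
      ring
    ext
    · simp only [Prod.smul_fst, smul_eq_mul, hs, ← hWd]; ring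
    · simp only [Prod.smul_snd, smul_eq_mul]; ring
end

section
/- Let d ≥ 1 and let a = (a_0, …, a_{d+1}) ∈ ℤ^{d+2} be balanced nonzero with a_0 > 0 and a_1 > 0, and set b = (a_0 + a_1, a_2, …, a_{d+1}) ∈ ℤ^{d+1}. For s ∈ ℕ let M^a_s be the set of exponent vectors r : {0, …, d+1} → ℕ with ∑_i r_i·|a_i| = s and r_i ≤ 1 whenever a_i < 0, and define M^b_{s'} analogously for b on index set {0, …, d}. For m ∈ ℤ set σ_w(m) = a_0·max(0, −m) + a_1·max(0, m). Then the map sending r ∈ M^a_s to the pair (m, r′), where m = r_1 − r_0 and r′ = (min(r_0, r_1), r_2, r_3, …, r_{d+1}), is a bijection from M^a_s onto the set of pairs (m, r′) with m ∈ ℤ satisfying −s/a_0 ≤ m ≤ s/a_1 and r′ ∈ M^b_{s − σ_w(m)}. -/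
/-- For balanced nonzero `a ∈ ℤ^{d+2}` (`d ≥ 1`) with `a₀, a₁ > 0` and
`b = (a₀+a₁, a₂, …, a_{d+1})`, the map `r ↦ (m, r')` with `m = r₁ - r₀` and
`r' = (min(r₀,r₁), r₂, …, r_{d+1})` is a bijection from the set `M^a_s` of exponent
vectors of weight `s` (with `rᵢ ≤ 1` whenever `aᵢ < 0`) onto the set of pairs `(m, r')`
with `-s/a₀ ≤ m ≤ s/a₁` and `r' ∈ M^b_{s - σ_w(m)}`, where
`σ_w(m) = a₀·max(0,-m) + a₁·max(0,m)`. -/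
theorem statement12 (d : ℕ) (hd : 1 ≤ d) (a : Fin (d + 2) → ℤ)
    (hne : ∀ i, a i ≠ 0) (hbal : ∑ i, a i = 0) (h0 : 0 < a 0) (h1 : 0 < a 1)
    (b : Fin (d + 1) → ℤ) (hb : b = Fin.cons (a 0 + a 1) (fun i : Fin d => a i.succ.succ))
    (σw : ℤ → ℤ) (hσw : ∀ m, σw m = a 0 * max 0 (-m) + a 1 * max 0 m)
    (s : ℕ) :
    Set.BijOn
      (fun r : Fin (d + 2) → ℕ =>
        ((r 1 : ℤ) - (r 0 : ℤ),
          (Fin.cons (min (r 0) (r 1)) (fun i : Fin d => r i.succ.succ) : Fin (d + 1) → ℕ)))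
      {r : Fin (d + 2) → ℕ | ∑ i, r i * (a i).natAbs = s ∧ ∀ i, a i < 0 → r i ≤ 1}
      {p : ℤ × (Fin (d + 1) → ℕ) |
        (-(s : ℚ) / (a 0 : ℚ) ≤ (p.1 : ℚ) ∧ (p.1 : ℚ) ≤ (s : ℚ) / (a 1 : ℚ)) ∧
        (∑ i, (p.2 i : ℤ) * (b i).natAbs = (s : ℤ) - σw p.1 ∧
          ∀ i, b i < 0 → p.2 i ≤ 1)} := by
  subst hb
  have e0 : ((a 0).natAbs : ℤ) = a 0 := by omega
  have e1 : ((a 1).natAbs : ℤ) = a 1 := by omega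
  have e01 : ((a 0 + a 1).natAbs : ℤ) = a 0 + a 1 := by omega
  have q0 : (0 : ℚ) < (a 0 : ℚ) := by exact_mod_cast h0
  have q1 : (0 : ℚ) < (a 1 : ℚ) := by exact_mod_cast h1
  have key : ∀ r : Fin (d + 2) → ℕ, (∑ i, r i * (a i).natAbs = s) ↔
      (r 0 : ℤ) * a 0 + ((r 1 : ℤ) * a 1 +
        ∑ i : Fin d, (r i.succ.succ : ℤ) * ((a i.succ.succ).natAbs : ℤ)) = s := by
    intro r
    rw [← Int.natCast_inj, Fin.sum_univ_succ, Fin.sum_univ_succ, Fin.succ_zero_eq_one]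
    simp only [Nat.cast_add, Nat.cast_mul, Nat.cast_sum, e0, e1]
  refine ⟨?_, ?_, ?_⟩
  · rintro r ⟨hr, hr1⟩
    rw [key] at hr
    have hT : 0 ≤ ∑ i : Fin d, (r i.succ.succ : ℤ) * ((a i.succ.succ).natAbs : ℤ) :=
      Finset.sum_nonneg fun i _ => by positivity
    have p0 : 0 ≤ (r 0 : ℤ) * a 0 := by positivity
    have p1 : 0 ≤ (r 1 : ℤ) * a 1 := by positivity
    refine ⟨⟨?_, ?_⟩, ?_, ?_⟩
    · rw [div_le_iff₀ q0]
      have : -(s : ℤ) ≤ ((r 1 : ℤ) - r 0) * a 0 := by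
        have : 0 ≤ (r 1 : ℤ) * a 0 := by positivity
        linarith
      exact_mod_cast this
    · rw [le_div_iff₀ q1]
      have : ((r 1 : ℤ) - r 0) * a 1 ≤ (s : ℤ) := by
        have : 0 ≤ (r 0 : ℤ) * a 1 := by positivity
        linarith
      exact_mod_cast this
    · simp only [Fin.sum_univ_succ (n := d), Fin.cons_zero, Fin.cons_succ, e01, hσw, Nat.cast_min]
      rcases le_total (r 0 : ℤ) (r 1) with h | h
      · rw [min_eq_left h, max_eq_left (by linarith), max_eq_right (by linarith)]
        linarith
      · rw [min_eq_right h, max_eq_right (by linarith), max_eq_left (by linarith)]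
        linarith
    · intro i
      refine Fin.cases ?_ (fun j => ?_) i
      · intro h
        simp only [Fin.cons_zero] at h
        omega
      · intro h
        simp only [Fin.cons_succ] at h ⊢
        exact hr1 _ h
  · intro r _ t _ h
    simp only [Prod.mk.injEq, Fin.cons_inj] at h
    obtain ⟨h, h', h''⟩ := h
    funext i
    refine Fin.cases ?_ (fun j => ?_) i
    · omega
    · refine Fin.cases ?_ (fun k => ?_) j
      · rw [Fin.succ_zero_eq_one]
        omega
      · exact congrFun h'' k
  · rintro ⟨m, q⟩ ⟨-, hq, hq1⟩
    simp only [Fin.sum_univ_succ (n := d), Fin.cons_zero, Fin.cons_succ, e01, hσw] at hq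
    let r : Fin (d + 2) → ℕ := Fin.cons (q 0 + (-m).toNat)
      (Fin.cons (q 0 + m.toNat) (fun i : Fin d => q i.succ) : Fin (d + 1) → ℕ)
    have r0 : r 0 = q 0 + (-m).toNat := rfl
    have r1 : r 1 = q 0 + m.toNat := rfl
    have r2 : ∀ i : Fin d, r i.succ.succ = q i.succ := fun i => rfl
    refine ⟨r, ⟨?_, ?_⟩, ?_⟩
    · rw [key]
      simp only [r0, r1, r2]
      simp only [Nat.cast_add, Int.ofNat_toNat]
      rw [max_comm (-m), max_comm m]
      linarith
    · intro i
      refine Fin.cases ?_ (fun j => ?_) i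
      · intro h
        omega
      · refine Fin.cases ?_ (fun k => ?_) j
        · rw [Fin.succ_zero_eq_one]
          intro h
          omega
        · intro h
          rw [r2]
          exact hq1 k.succ (by simpa using h)
    · simp only [r0, r1, r2, Prod.mk.injEq]
      refine ⟨by omega, ?_⟩
      funext i
      refine Fin.cases ?_ (fun j => ?_) i
      · rw [Fin.cons_zero]
        omega
      · rw [Fin.cons_succ]
end

section
/- Let N and m be natural numbers with m ≤ N, let S be the multivariate polynomial ring over ℂ in N variables X_0, …, X_{N−1}, and let I ⊆ S be the ideal generated by the variables X_0, …, X_{m−1}. Then for every k ≥ 0, the Ext group Ext^k_S(S/I, S/I), computed in the abelian category of S-modules, is isomorphic (as an abelian group, equivalently as an S-module) to the direct sum of binomial(m, k) copies of S/I; in particular Ext^k_S(S/I, S/I) = 0 for k > m. -/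
open CategoryTheory

/-- A minimal free resolution of `R/I` with Betti numbers `m.choose n`. -/
structure KRes (R : Type) [CommRing R] (I : Ideal R) (m : ℕ) where
  M : ℕ → ModuleCat.{0} R
  d : ∀ n, M (n + 1) →ₗ[R] M n
  ε : M 0 ≃ₗ[R] R
  e : ∀ n, Nonempty (M n ≃ₗ[R] (Fin (m.choose n) → R))
  dd : ∀ n x, d n (d (n + 1) x) = 0
  ex : ∀ n x, d n x = 0 → ∃ y, d (n + 1) y = x
  εd : ∀ x, ε (d 0 x) ∈ I
  εex : ∀ x, ε x ∈ I → ∃ y, d 0 y = x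
  minl : ∀ J : Ideal R, I ≤ J → ∀ n (φ : M n →ₗ[R] R ⧸ J) x, φ (d n x) = 0

namespace KRes

variable {R : Type} [CommRing R]

/-- The resolution of `R`. -/
noncomputable def base : KRes R ⊥ 0 where
  M n := ModuleCat.of R (Fin ((0 : ℕ).choose n) → R)
  d n := 0
  ε := LinearEquiv.funUnique (Fin 1) R R
  e n := ⟨LinearEquiv.refl _ _⟩
  dd n x := rfl
  ex n x h := ⟨0, by
    funext i
    exact Fin.elim0 i⟩
  εd x := map_zero (LinearEquiv.funUnique (Fin 1) R R)
  εex x h := ⟨0, by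
    have h' : (LinearEquiv.funUnique (Fin 1) R R) x = 0 := h
    have := (LinearEquiv.map_eq_zero_iff _).1 h'
    rw [this]; rfl⟩
  minl J hJ n φ x := map_zero φ

variable {I : Ideal R} {m : ℕ} (K : KRes R I m) (r : R)

/-- Modules of the cone. -/
def cM : ℕ → ModuleCat.{0} R
  | 0 => K.M 0
  | n + 1 => ModuleCat.of R (K.M (n + 1) × K.M n)

/-- Differential of the cone. -/
noncomputable def cd : ∀ n, K.cM (n + 1) →ₗ[R] K.cM n
  | 0 => LinearMap.coprod (K.d 0) (r • LinearMap.id)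
  | n + 1 => LinearMap.prod (LinearMap.coprod (K.d (n + 1)) (r • LinearMap.id))
      (-(K.d n ∘ₗ LinearMap.snd R _ _))

lemma cd_zero (a : K.M 1) (b : K.M 0) : K.cd r 0 (a, b) = K.d 0 a + r • b := by
  change LinearMap.coprod (K.d 0) (r • LinearMap.id) (a, b) = _
  simp

lemma cd_succ (n : ℕ) (a : K.M (n + 2)) (b : K.M (n + 1)) :
    K.cd r (n + 1) (a, b) = (K.d (n + 1) a + r • b, - K.d n b) := by
  change (LinearMap.prod (LinearMap.coprod (K.d (n + 1)) (r • LinearMap.id))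
      (-(K.d n ∘ₗ LinearMap.snd R _ _))) (a, b) = _
  simp

lemma aux (n : ℕ) (a : K.M (n + 1)) (b : K.M n) (h : K.d n a + r • b = 0)
    (hb : ∃ c, K.d n c = b) : ∃ y, K.cd r (n + 1) y = (a, b) := by
  obtain ⟨c, rfl⟩ := hb
  obtain ⟨e, he⟩ := K.ex n (a + r • c) (by simpa using h)
  refine ⟨(e, -c), ?_⟩
  rw [cd_succ, he]
  simp
  rfl

/-- The cone. -/
noncomputable def cone (hr : ∀ f, r * f ∈ I → f ∈ I) : KRes R (I ⊔ Ideal.span {r}) (m + 1) where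
  M := K.cM
  d := K.cd r
  ε := K.ε
  e n := by
    cases n with
    | zero =>
      obtain ⟨f⟩ := K.e 0
      exact ⟨f.trans (LinearEquiv.funCongrLeft R R (finCongr (by simp)))⟩
    | succ n =>
      obtain ⟨f⟩ := K.e n
      obtain ⟨g⟩ := K.e (n + 1)
      exact ⟨(g.prodCongr f).trans ((LinearEquiv.sumArrowLequivProdArrow _ _ R R).symm.trans
        (LinearEquiv.funCongrLeft R R ((finCongr (by
          rw [Nat.choose_succ_succ, add_comm])).trans finSumFinEquiv.symm)))⟩
  dd n x := by
    cases n with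
    | zero =>
      obtain ⟨a, b⟩ := x
      rw [cd_succ]
      erw [cd_zero]
      simp [K.dd]
      rfl
    | succ n =>
      obtain ⟨a, b⟩ := x
      rw [cd_succ]
      erw [cd_succ]
      simp [K.dd]
      rfl
  ex n x h := by
    cases n with
    | zero =>
      obtain ⟨a, b⟩ := x
      rw [cd_zero] at h
      refine K.aux r 0 a b h (K.εex b (hr _ ?_))
      have h0 : K.d 0 a + r • b = (0 : K.M 0) := h
      have := congrArg K.ε h0
      simp only [map_add, map_smul, map_zero, smul_eq_mul] at this
      rw [eq_neg_of_add_eq_zero_right this]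
      exact I.neg_mem (K.εd a)
    | succ n =>
      obtain ⟨a, b⟩ := x
      rw [cd_succ] at h
      have h1 := congrArg Prod.fst h
      have h2 := congrArg Prod.snd h
      exact K.aux r (n + 1) a b h1 (K.ex n b (neg_eq_zero.1 h2))
  εd x := by
    obtain ⟨a, b⟩ := x
    rw [cd_zero]
    have h0 : K.ε (K.d 0 a + r • b) = K.ε (K.d 0 a) + r * K.ε b := by simp
    refine (congrArg (· ∈ I ⊔ Ideal.span {r}) h0).mpr ?_
    refine Ideal.add_mem _ (Ideal.mem_sup_left (K.εd a)) (Ideal.mem_sup_right ?_)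
    exact Ideal.mul_mem_right _ _ (Ideal.mem_span_singleton_self r)
  εex x h := by
    obtain ⟨u, hu, v, hv, huv⟩ := Submodule.mem_sup.1 h
    obtain ⟨w, rfl⟩ := Ideal.mem_span_singleton.1 hv
    obtain ⟨a, ha⟩ := K.εex (K.ε.symm u) (by simpa using hu)
    refine ⟨(a, K.ε.symm w), ?_⟩
    rw [cd_zero, ha]
    refine K.ε.injective (Eq.trans ?_ huv)
    simp
  minl J hJ n φ x := by
    have hIJ : I ≤ J := le_sup_left.trans hJ
    have hrJ : r ∈ J := hJ (Ideal.mem_sup_right (Ideal.mem_span_singleton_self r))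
    have key : ∀ z : R ⧸ J, r • z = 0 := by
      intro z
      obtain ⟨z, rfl⟩ := Ideal.Quotient.mk_surjective z
      rw [← Ideal.Quotient.mk_eq_mk, ← Submodule.Quotient.mk_smul]
      exact (Submodule.Quotient.mk_eq_zero _).2 (Ideal.mul_mem_right _ _ hrJ)
    cases n with
    | zero =>
      obtain ⟨a, b⟩ := x
      let ψ : K.M 0 →ₗ[R] R ⧸ J := φ
      rw [cd_zero]
      change ψ (K.d 0 a + r • b) = 0
      rw [map_add, map_smul, key, add_zero]
      exact K.minl J hIJ 0 ψ a
    | succ n =>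
      obtain ⟨a, b⟩ := x
      let ψ : (K.M (n + 1) × K.M n) →ₗ[R] R ⧸ J := φ
      have h1 := K.minl J hIJ (n + 1) (ψ ∘ₗ LinearMap.inl R _ _) a
      have h2 := K.minl J hIJ n (ψ ∘ₗ LinearMap.inr R _ _) b
      rw [cd_succ]
      change ψ _ = 0
      have : ((K.d (n + 1) a + r • b, - K.d n b) : K.M (n + 1) × K.M n)
          = LinearMap.inl R _ _ (K.d (n + 1) a) + r • LinearMap.inl R _ _ b
            - LinearMap.inr R _ _ (K.d n b) := by
        ext <;> simp
      rw [this, map_sub, map_add, map_smul, key]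
      simp only [LinearMap.comp_apply] at h1 h2
      rw [h1, h2]; simp

/-- The chain complex. -/
noncomputable def cplx : ChainComplex (ModuleCat.{0} R) ℕ :=
  ChainComplex.of K.M (fun n => ModuleCat.ofHom (K.d n)) (fun n => by
    ext x
    exact K.dd n x)

lemma cplx_d (n : ℕ) : K.cplx.d (n + 1) n = ModuleCat.ofHom (K.d n) :=
  ChainComplex.of_d K.M (fun n => ModuleCat.ofHom (K.d n)) n

/-- The augmentation. -/
noncomputable def aug : K.cplx.X 0 ⟶ ModuleCat.of R (R ⧸ I) :=
  ModuleCat.ofHom ((Submodule.mkQ I) ∘ₗ K.ε.toLinearMap)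

lemma d_aug : K.cplx.d 1 0 ≫ K.aug = 0 := by
  rw [K.cplx_d 0]
  ext x
  exact (Submodule.Quotient.mk_eq_zero _).2 (K.εd x)

lemma exactAt (n : ℕ) : K.cplx.ExactAt (n + 1) := by
  rw [HomologicalComplex.exactAt_iff' _ (n + 1 + 1) (n + 1) n (by simp) (by simp),
    ShortComplex.moduleCat_exact_iff]
  intro x hx
  change K.cplx.d (n + 1) n x = 0 at hx
  rw [cplx_d] at hx
  obtain ⟨y, hy⟩ := K.ex n x hx
  refine ⟨y, ?_⟩
  change K.cplx.d (n + 1 + 1) (n + 1) y = x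
  rw [cplx_d]
  exact hy

lemma exact_aug : (ShortComplex.mk _ _ K.d_aug).Exact := by
  rw [ShortComplex.moduleCat_exact_iff]
  intro x hx
  obtain ⟨y, hy⟩ := K.εex x ((Submodule.Quotient.mk_eq_zero _).1 hx)
  refine ⟨y, ?_⟩
  change K.cplx.d (0 + 1) 0 y = x
  rw [cplx_d]
  exact hy

lemma epi_aug : Epi K.aug := by
  rw [ModuleCat.epi_iff_surjective]
  exact (Submodule.mkQ_surjective I).comp K.ε.surjective

lemma proj (n : ℕ) : Projective (K.cplx.X n) := by
  obtain ⟨e⟩ := K.e n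
  have : Module.Projective R (K.M n) := Module.Projective.of_equiv e.symm
  exact (IsProjective.iff_projective (R := R) (K.M n)).1 this

/-- The projective resolution. -/
noncomputable def res : ProjectiveResolution (ModuleCat.of R (R ⧸ I)) where
  complex := K.cplx
  projective := K.proj
  π := (ChainComplex.toSingle₀Equiv _ _).symm ⟨K.aug, K.d_aug⟩
  quasiIso := ⟨fun n => by
    cases n
    · rw [ChainComplex.quasiIsoAt₀_iff, ShortComplex.quasiIso_iff_of_zeros']
      · refine (ShortComplex.exact_and_epi_g_iff_of_iso ?_).2
          ⟨K.exact_aug, K.epi_aug⟩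
        exact ShortComplex.isoMk (Iso.refl _) (Iso.refl _) (Iso.refl _)
          ((Category.id_comp _).trans (Category.comp_id _).symm)
          ((Category.id_comp _).trans (Eq.trans (by simp; rfl) (Category.comp_id _).symm))
      all_goals rfl
    · rw [quasiIsoAt_iff_exactAt']
      · apply K.exactAt
      · apply ChainComplex.exactAt_succ_single_obj⟩

lemma yd (i j : ℕ) :
    (K.cplx.linearYonedaObj R (ModuleCat.of R (R ⧸ I))).d i j = 0 := by
  by_cases h : i + 1 = j
  · subst h
    ext φ
    change K.cplx.d (i + 1) i ≫ φ = 0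
    rw [cplx_d]
    ext x
    exact K.minl I le_rfl i φ.hom x
  · exact HomologicalComplex.shape _ _ _ h

lemma ext_equiv (K : KRes R I m) (k : ℕ) : Nonempty
    ((((Ext R (ModuleCat.{0} R) k).obj (Opposite.op (ModuleCat.of R (R ⧸ I)))).obj
      (ModuleCat.of R (R ⧸ I)) : ModuleCat R) ≃ₗ[R] (Fin (m.choose k) → R ⧸ I)) := by
  obtain ⟨e⟩ := K.e k
  let C := K.cplx.linearYonedaObj R (ModuleCat.of R (R ⧸ I))
  let i1 := K.res.isoExt (R := R) k (ModuleCat.of R (R ⧸ I))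
  let i2 : C.homology k ≅ C.X k :=
    (C.isoHomologyπ _ k rfl (K.yd _ _)).symm ≪≫ C.iCyclesIso k _ rfl (K.yd _ _)
  let f1 := (i1 ≪≫ i2).toLinearEquiv
  let f2 : C.X k ≃ₗ[R] (K.M k →ₗ[R] R ⧸ I) :=
    ModuleCat.homLinearEquiv (S := R) (M := K.M k) (N := ModuleCat.of R (R ⧸ I))
  let f3 : (K.M k →ₗ[R] R ⧸ I) ≃ₗ[R] ((Fin (m.choose k) → R) →ₗ[R] R ⧸ I) :=
    LinearEquiv.congrLeft (R ⧸ I) R e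
  let f4 := ((Pi.basisFun R (Fin (m.choose k))).constr R (M' := R ⧸ I)).symm
  exact ⟨((f1.trans f2).trans f3).trans f4⟩

end KRes

lemma X_mul_mem {N m : ℕ} (h : m < N) (f : MvPolynomial (Fin N) ℂ)
    (hf : MvPolynomial.X ⟨m, h⟩ * f ∈
      Ideal.span ((fun i => MvPolynomial.X i) '' {i : Fin N | (i : ℕ) < m})) :
    f ∈ Ideal.span ((fun i => (MvPolynomial.X i : MvPolynomial (Fin N) ℂ)) ''
      {i : Fin N | (i : ℕ) < m}) := by
  refine MvPolynomial.mem_ideal_span_X_image.2 fun e he => ?_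
  obtain ⟨i, hi, hne⟩ := (MvPolynomial.mem_ideal_span_X_image.1 hf)
    (Finsupp.single ⟨m, h⟩ 1 + e) (by
      rw [MvPolynomial.mem_support_iff] at he ⊢
      rwa [MvPolynomial.coeff_X_mul])
  refine ⟨i, hi, ?_⟩
  have hi' : (i : ℕ) < m := hi
  have : (⟨m, h⟩ : Fin N) ≠ i := by
    rintro rfl
    simp at hi'
  simpa [Finsupp.single_apply, this] using hne

lemma exists_KRes (N m : ℕ) (hm : m ≤ N) :
    Nonempty (KRes (MvPolynomial (Fin N) ℂ)
      (Ideal.span ((fun i => MvPolynomial.X i) '' {i : Fin N | (i : ℕ) < m})) m) := by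
  induction m with
  | zero =>
    have : Ideal.span ((fun i => (MvPolynomial.X i : MvPolynomial (Fin N) ℂ)) ''
      {i : Fin N | (i : ℕ) < 0}) = ⊥ := by simp
    rw [this]
    exact ⟨KRes.base⟩
  | succ m ih =>
    obtain ⟨K⟩ := ih (by omega)
    have : Ideal.span ((fun i => (MvPolynomial.X i : MvPolynomial (Fin N) ℂ)) ''
      {i : Fin N | (i : ℕ) < m + 1}) =
        Ideal.span ((fun i => (MvPolynomial.X i : MvPolynomial (Fin N) ℂ)) ''
          {i : Fin N | (i : ℕ) < m}) ⊔ Ideal.span {MvPolynomial.X ⟨m, hm⟩} := by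
      rw [← Ideal.span_union]
      congr 1
      have hs : {i : Fin N | (i : ℕ) < m + 1} = {i : Fin N | (i : ℕ) < m} ∪ {⟨m, hm⟩} := by
        ext i
        simp only [Set.mem_ofPred_eq, Set.mem_union, Set.mem_singleton_iff, Fin.ext_iff]
        omega
      rw [hs, Set.image_union, Set.image_singleton]
    rw [this]
    exact ⟨K.cone _ (X_mul_mem hm)⟩

/-- Let `S = ℂ[X₀, …, X_{N-1}]`, `m ≤ N`, and `I` the ideal generated by
`X₀, …, X_{m-1}`.  Then for every `k`, `Ext^k_S(S/I, S/I)` (in the abelian category of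
`S`-modules) is isomorphic as an `S`-module to the direct sum of `binomial(m, k)` copies
of `S/I`; in particular it vanishes for `k > m`. -/
theorem statement13 (N m : ℕ) (hm : m ≤ N)
    (I : Ideal (MvPolynomial (Fin N) ℂ))
    (hI : I = Ideal.span ((fun i => MvPolynomial.X i) '' {i : Fin N | (i : ℕ) < m})) :
    (∀ k : ℕ,
      Nonempty
        ((((Ext (MvPolynomial (Fin N) ℂ) (ModuleCat (MvPolynomial (Fin N) ℂ)) k).obj
            (Opposite.op (ModuleCat.of (MvPolynomial (Fin N) ℂ)
              (MvPolynomial (Fin N) ℂ ⧸ I)))).obj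
          (ModuleCat.of (MvPolynomial (Fin N) ℂ) (MvPolynomial (Fin N) ℂ ⧸ I)) :
            ModuleCat (MvPolynomial (Fin N) ℂ)) ≃ₗ[MvPolynomial (Fin N) ℂ]
          (Fin (m.choose k) → MvPolynomial (Fin N) ℂ ⧸ I))) ∧
    (∀ k : ℕ, m < k →
      Subsingleton
        ((((Ext (MvPolynomial (Fin N) ℂ) (ModuleCat (MvPolynomial (Fin N) ℂ)) k).obj
            (Opposite.op (ModuleCat.of (MvPolynomial (Fin N) ℂ)
              (MvPolynomial (Fin N) ℂ ⧸ I)))).obj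
          (ModuleCat.of (MvPolynomial (Fin N) ℂ) (MvPolynomial (Fin N) ℂ ⧸ I)) :
            ModuleCat (MvPolynomial (Fin N) ℂ)))) := by

  obtain ⟨K⟩ := exists_KRes N m hm
  rw [← hI] at K
  refine ⟨fun k => K.ext_equiv k, fun k hk => ?_⟩
  obtain ⟨e⟩ := K.ext_equiv k
  rw [Nat.choose_eq_zero_of_lt hk] at e
  exact e.toEquiv.subsingleton
end
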